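/- arXiv:2007.10664 — 8 statements merged into one kernel-verified Lean document; each statement's English description precedes it below -/
import Mathlib

section
/- The simultaneous projection operator T_ω is a bounded linear operator on H which is self-adjoint, satisfies ‖T_ω‖ ≤ 1, and whose fixed point set {x ∈ H : T_ω x = x} equals M = ⋂ᵢ Mᵢ. -/
open RealInnerProductSpace

/-- The simultaneous projection operator `T_ω x = ∑ᵢ ω i • P_{Mᵢ} x`
is a bounded linear operator on `H`, self-adjoint, of norm at most one, and its
fixed point set is `M = ⨅ᵢ Mᵢ`. -/
theorem stmt_1 {H : Type*} [NormedAddCommGroup H] [InnerProductSpace ℝ H] [CompleteSpace H]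
    {ι : Type*} [Countable ι] [Nonempty ι]
    (ω : ι → ℝ) (hω : ∀ i, 0 < ω i) (hωsum : HasSum ω 1)
    (M : ι → Submodule ℝ H) [∀ i, CompleteSpace (M i)]
    (hMnt : ∀ i, M i ≠ ⊥) :
    ∃ T : H →L[ℝ] H,
      (∀ z : H, T z = ∑' i, ω i • ((Submodule.orthogonalProjectionOnto (M i) z : H))) ∧
      IsSelfAdjoint T ∧ ‖T‖ ≤ 1 ∧
      {z : H | T z = z} = ((⨅ i, M i : Submodule ℝ H) : Set H) := by
  have hle : ∀ i, ‖ω i • (M i).starProjection‖ ≤ ω i := by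
    intro i
    rw [norm_smul, Real.norm_of_nonneg (hω i).le]
    exact mul_le_of_le_one_right (hω i).le (Submodule.starProjection_norm_le _)
  have hs : Summable (fun i => ω i • (M i).starProjection) :=
    Summable.of_norm_bounded hωsum.summable hle
  obtain ⟨T, hT⟩ := hs
  have hTz : ∀ z, HasSum (fun i => ω i • (M i).starProjection z) (T z) := fun z => by
    simpa using hT.mapL (ContinuousLinearMap.apply ℝ H z)
  refine ⟨T, fun z => (hTz z).tsum_eq.symm, ?_, ?_, ?_⟩
  · rw [ContinuousLinearMap.isSelfAdjoint_iff_isSymmetric]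
    intro x y
    have h1 := (hTz x).mapL (innerSL ℝ y)
    have h2 := (hTz y).mapL (innerSL ℝ x)
    simp only [innerSL_apply_apply, inner_smul_right] at h1 h2
    change ⟪T x, y⟫ = ⟪x, T y⟫
    rw [real_inner_comm]
    refine h1.unique ?_
    convert h2 using 3 with i
    rw [real_inner_comm, Submodule.inner_starProjection_left_eq_right]
  · rw [← hT.tsum_eq]
    exact tsum_of_norm_bounded hωsum hle
  · ext z
    simp only [Set.mem_ofPred_eq, SetLike.mem_coe, Submodule.mem_iInf]
    constructor
    · intro hz i
      have h1 := (hTz z).mapL (innerSL ℝ z)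
      simp only [innerSL_apply_apply, inner_smul_right, hz] at h1
      have h2 := (hωsum.mul_right ⟪z, z⟫).sub h1
      simp only [one_mul, sub_self, ← mul_sub] at h2
      have key : ∀ j, ⟪z, z⟫ - ⟪z, (M j).starProjection z⟫ = ‖z - (M j).starProjection z‖ ^ 2 := by
        intro j
        have h3 : ⟪z - (M j).starProjection z, (M j).starProjection z⟫ = 0 :=
          Submodule.starProjection_inner_eq_zero z _ (Submodule.starProjection_apply_mem _ _)
        rw [← real_inner_self_eq_norm_sq, inner_sub_right, h3, sub_zero, inner_sub_left,
          real_inner_comm z ((M j).starProjection z)]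
      simp only [key] at h2
      have h4 := (hasSum_zero_iff_of_nonneg
        (fun j => mul_nonneg (hω j).le (sq_nonneg _))).1 h2
      have h5 := congrFun h4 i
      simp only [Pi.zero_apply, mul_eq_zero, (hω i).ne', false_or, ne_eq, OfNat.ofNat_ne_zero,
        not_false_eq_true, pow_eq_zero_iff, norm_eq_zero, sub_eq_zero] at h5
      rw [h5]
      exact Submodule.starProjection_apply_mem _ _
    · intro hz
      have h1 := hωsum.smul_const z
      rw [one_smul] at h1
      refine (hTz z).unique ?_
      convert h1 using 3 with i
      exact Submodule.starProjection_eq_self_iff.2 (hz i)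
end

section
/- For every x ∈ H, the iterates of the simultaneous projection method converge in norm to the projection of x onto the intersection: ‖T_ω^k x − P_M x‖ → 0 as k → ∞. -/
open RealInnerProductSpace

theorem aux_iter {H : Type*} [NormedAddCommGroup H] [InnerProductSpace ℝ H] [CompleteSpace H]
    (T : H →ₗ[ℝ] H) (hT : ∀ x, ‖T x‖ ^ 2 ≤ ⟪T x, x⟫) (K : Submodule ℝ H) [CompleteSpace K]
    (h1 : ∀ z ∈ K, T z = z) (h2 : ∀ v, ⟪T v, v⟫ = ‖v‖ ^ 2 → v ∈ K) (x : H) :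
    Filter.Tendsto (fun k : ℕ => ‖T^[k] x - (Submodule.orthogonalProjectionOnto K x : H)‖)
      Filter.atTop (nhds 0) := by
  have hc : ∀ x, ‖T x‖ ≤ ‖x‖ := by
    intro x
    have h := hT x
    have h' := real_inner_le_norm (T x) x
    by_contra! hlt
    nlinarith [norm_nonneg x, norm_nonneg (T x)]
  have hsub : ∀ (k : ℕ) (a b : H), T^[k] (a - b) = T^[k] a - T^[k] b := by
    intro k
    induction k with
    | zero => intro a b; rfl
    | succ n ih => intro a b; simp only [Function.iterate_succ_apply, map_sub, ih]
  have hck : ∀ (k : ℕ) (a : H), ‖T^[k] a‖ ≤ ‖a‖ := by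
    intro k
    induction k with
    | zero => intro a; exact le_rfl
    | succ n ih => intro a; rw [Function.iterate_succ_apply]; exact (ih _).trans (hc _)
  -- range case
  have hrange : ∀ u : H, Filter.Tendsto (fun k : ℕ => ‖T^[k] (u - T u)‖)
      Filter.atTop (nhds 0) := by
    intro u
    have hanti : Antitone (fun k : ℕ => ‖T^[k] u‖ ^ 2) := by
      apply antitone_nat_of_succ_le
      intro n
      rw [Function.iterate_succ_apply']
      exact pow_le_pow_left₀ (norm_nonneg _) (hc _) 2
    have hlim := tendsto_atTop_ciInf hanti ⟨0, by rintro _ ⟨k, rfl⟩; positivity⟩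
    have hlim2 := hlim.sub (hlim.comp (Filter.tendsto_add_atTop_nat 1))
    rw [sub_self] at hlim2
    have hsq : Filter.Tendsto (fun k : ℕ => ‖T^[k] (u - T u)‖ ^ 2) Filter.atTop (nhds 0) := by
      refine squeeze_zero (fun k => by positivity) (fun k => ?_) hlim2
      simp only [Function.comp]
      rw [hsub, ← Function.iterate_succ_apply, Function.iterate_succ_apply', norm_sub_sq_real,
        real_inner_comm]
      linarith [hT (T^[k] u)]
    have := hsq.sqrt
    simpa [Real.sqrt_sq] using this
  set R : Submodule ℝ H := LinearMap.range (LinearMap.id - T) with hR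
  have hRK : Rᗮ ≤ K := by
    intro v hv
    apply h2
    have := (Submodule.mem_orthogonal R v).1 hv (v - T v) ⟨v, rfl⟩
    rw [inner_sub_left, real_inner_self_eq_norm_sq] at this
    linarith
  set y := x - (Submodule.orthogonalProjectionOnto K x : H) with hy
  have hyK : y ∈ Kᗮ := by
    rw [hy]; exact Submodule.sub_starProjection_mem_orthogonal (K := K) x
  have hyR : y ∈ closure (R : Set H) := by
    have := Submodule.orthogonal_le hRK hyK
    rw [Submodule.orthogonal_orthogonal_eq_closure] at this
    exact this
  have hfix : ∀ k : ℕ, T^[k] (Submodule.orthogonalProjectionOnto K x : H)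
      = (Submodule.orthogonalProjectionOnto K x : H) := fun k =>
    Function.iterate_fixed (h1 _ (Submodule.coe_mem _)) k
  have heq : ∀ k : ℕ, T^[k] x - (Submodule.orthogonalProjectionOnto K x : H) = T^[k] y := by
    intro k; rw [hy, hsub, hfix]
  simp only [heq]
  rw [Metric.tendsto_atTop]
  intro ε hε
  obtain ⟨b, ⟨u, rfl⟩, hb⟩ := Metric.mem_closure_iff.1 hyR (ε / 2) (by positivity)
  obtain ⟨N, hN⟩ := Metric.tendsto_atTop.1 (hrange u) (ε / 2) (by positivity)
  refine ⟨N, fun n hn => ?_⟩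
  have h3 := hN n hn
  rw [Real.dist_eq, sub_zero, abs_of_nonneg (norm_nonneg _)] at h3 ⊢
  have h4 := hck n (y - (u - T u))
  have h5 : ‖y - (u - T u)‖ < ε / 2 := by rw [← dist_eq_norm]; exact hb
  rw [hsub] at h4
  have h6 := norm_sub_norm_le (T^[n] y) (T^[n] (u - T u))
  linarith

/-- For every `x ∈ H`, the iterates of the simultaneous projection
method converge in norm to `P_M x`: `‖T_ω^k x − P_M x‖ → 0` as `k → ∞`. -/
theorem stmt_2 {H : Type*} [NormedAddCommGroup H] [InnerProductSpace ℝ H] [CompleteSpace H]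
    {ι : Type*} [Countable ι] [Nonempty ι]
    (ω : ι → ℝ) (hω : ∀ i, 0 < ω i) (hωsum : HasSum ω 1)
    (M : ι → Submodule ℝ H) [∀ i, CompleteSpace (M i)]
    [CompleteSpace ↥(⨅ i, M i : Submodule ℝ H)]
    (hMnt : ∀ i, M i ≠ ⊥) (x : H) :
    Filter.Tendsto
      (fun k : ℕ =>
        ‖(fun z : H => ∑' i, ω i • ((Submodule.orthogonalProjectionOnto (M i) z : H)))^[k] x -
          (Submodule.orthogonalProjectionOnto (⨅ i, M i : Submodule ℝ H) x : H)‖)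
      Filter.atTop (nhds 0) := by
  have hle : ∀ i z, ‖(Submodule.orthogonalProjectionOnto (M i) z : H)‖ ≤ ‖z‖ := fun i z =>
    Submodule.norm_starProjection_apply_le (M i) z
  have hsm : ∀ z : H, Summable
      (fun i => ω i • (Submodule.orthogonalProjectionOnto (M i) z : H)) := by
    intro z
    refine Summable.of_norm_bounded (g := fun i => ω i * ‖z‖) (hωsum.summable.mul_right _) ?_
    intro i
    rw [norm_smul, Real.norm_of_nonneg (hω i).le]
    exact mul_le_mul_of_nonneg_left (hle i z) (hω i).le
  let T : H →ₗ[ℝ] H :=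
    { toFun := fun z => ∑' i, ω i • (Submodule.orthogonalProjectionOnto (M i) z : H)
      map_add' := by
        intro a b
        rw [← (hsm a).tsum_add (hsm b)]
        simp only [map_add, Submodule.coe_add, smul_add]
      map_smul' := by
        intro c a
        simp only [map_smul, Submodule.coe_smul, RingHom.id_apply]
        rw [← (hsm a).tsum_const_smul c]
        simp only [smul_comm c] }
  have hin : ∀ z w : H, HasSum
      (fun i => ω i * ⟪(Submodule.orthogonalProjectionOnto (M i) z : H), w⟫) ⟪T z, w⟫ := by
    intro z w
    have h := (hsm z).hasSum.mapL (innerSL ℝ w)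
    simp only [innerSL_apply_apply, inner_smul_right] at h
    simp only [real_inner_comm w] 
    exact h
  have hself : ∀ i z, ⟪(Submodule.orthogonalProjectionOnto (M i) z : H), z⟫
      = ‖(Submodule.orthogonalProjectionOnto (M i) z : H)‖ ^ 2 := by
    intro i z
    have := Submodule.starProjection_inner_eq_zero (K := M i) z _
      (Submodule.coe_mem (Submodule.orthogonalProjectionOnto (M i) z))
    rw [Submodule.starProjection_apply, inner_sub_left, real_inner_self_eq_norm_sq,
      real_inner_comm] at this
    linarith
  refine aux_iter T ?_ (⨅ i, M i) ?_ ?_ x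
  · intro z
    have ha := ((hin z (T z)).mul_left 2).sub (hωsum.mul_right (‖T z‖ ^ 2))
    have hb := hasSum_le (fun i => ?_) ha (hin z z)
    · rw [real_inner_self_eq_norm_sq] at hb; linarith
    · rw [hself]
      have := norm_sub_sq_real (Submodule.orthogonalProjectionOnto (M i) z : H) (T z)
      nlinarith [hω i, sq_nonneg ‖(Submodule.orthogonalProjectionOnto (M i) z : H) - T z‖,
        mul_nonneg (hω i).le (sq_nonneg ‖(Submodule.orthogonalProjectionOnto (M i) z : H) - T z‖)]
  · intro z hz
    have hz' := (Submodule.mem_iInf _).1 hz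
    have h : ∀ i, (Submodule.orthogonalProjectionOnto (M i) z : H) = z := fun i =>
      Submodule.starProjection_eq_self_iff.2 (hz' i)
    change ∑' i, ω i • (Submodule.orthogonalProjectionOnto (M i) z : H) = z
    simp only [h]
    rw [hωsum.summable.tsum_smul_const, hωsum.tsum_eq, one_smul]
  · intro v hv
    have hs := (hωsum.mul_right (‖v‖ ^ 2)).sub (hin v v)
    rw [hv, one_mul, sub_self] at hs
    have hnn : ∀ i, 0 ≤ ω i * ‖v‖ ^ 2 -
        ω i * ⟪(Submodule.orthogonalProjectionOnto (M i) v : H), v⟫ := by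
      intro i
      rw [hself, ← mul_sub]
      exact mul_nonneg (hω i).le
        (sub_nonneg.2 (pow_le_pow_left₀ (norm_nonneg _) (hle i v) 2))
    have h0 := (hasSum_zero_iff_of_nonneg hnn).1 hs
    rw [Submodule.mem_iInf]
    intro i
    have hi := congrFun h0 i
    simp only [Pi.zero_apply] at hi
    rw [← mul_sub] at hi
    have hi2 := (mul_eq_zero.1 hi).resolve_left (hω i).ne'
    have hn := norm_sub_sq_real (Submodule.orthogonalProjectionOnto (M i) v : H) v
    have hz : ‖(Submodule.orthogonalProjectionOnto (M i) v : H) - v‖ ^ 2 = 0 := by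
      rw [hn]; have := hself i v; linarith
    have hz2 := sub_eq_zero.1 (norm_eq_zero.1 (pow_eq_zero_iff (two_ne_zero)|>.1 hz))
    rw [← hz2]
    exact Submodule.coe_mem _
end

section
/- For every integer k ≥ 1, the operator norm in B(H) satisfies ‖T_ω^k − P_M‖ = c_ω^{2k}. In particular ‖T_ω^k − P_M‖ = ‖T_ω − P_M‖^k for all k ≥ 1, and c_ω ≤ 1. -/
open RealInnerProductSpace

/-- The cosine of the Friedrichs angle between the product subspace `∏ᵢ Mᵢ` and the
diagonal in the `ω`-weighted `ℓ²` product space, expressed intrinsically in `H`. -/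
noncomputable def friedrichsCos {H : Type*} [NormedAddCommGroup H] [InnerProductSpace ℝ H]
    {ι : Type*} (ω : ι → ℝ) (M : ι → Submodule ℝ H) : ℝ :=
  sSup { r : ℝ | ∃ (x : ι → H) (y : H),
    (∀ i, x i ∈ M i ⊓ (⨅ j, M j)ᗮ) ∧
    (Summable fun i => ω i * ‖x i‖ ^ 2) ∧ (∑' i, ω i * ‖x i‖ ^ 2) ≤ 1 ∧
    y ∈ (⨅ j, M j)ᗮ ∧ ‖y‖ ≤ 1 ∧
    r = ∑' i, ω i * ⟪x i, y⟫ }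

theorem aux_norm_pow {E : Type*} [NormedRing E] [StarRing E] [CStarRing E] {S : E}
    (hS : IsSelfAdjoint S) (k : ℕ) (hk : 1 ≤ k) : ‖S ^ k‖ = ‖S‖ ^ k := by
  apply le_antisymm (norm_pow_le' S hk)
  rcases eq_or_lt_of_le (norm_nonneg S) with h0 | h0
  · rw [← h0, zero_pow (by omega)]
    exact norm_nonneg _
  · have h1 : k < 2 ^ k := Nat.lt_two_pow_self
    obtain ⟨m, hm⟩ : ∃ m, 2 ^ k = k + (m + 1) := ⟨2 ^ k - k - 1, by omega⟩
    have h2 := hS.norm_pow_two_pow k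
    rw [hm, pow_add S k, pow_add ‖S‖ k] at h2
    have h3 : ‖S ^ k * S ^ (m + 1)‖ ≤ ‖S ^ k‖ * ‖S‖ ^ (m + 1) :=
      (norm_mul_le _ _).trans
        (mul_le_mul_of_nonneg_left (norm_pow_le' S (Nat.succ_pos m)) (norm_nonneg _))
    rw [h2] at h3
    exact le_of_mul_le_mul_right h3 (pow_pos h0 _)

/-- For every `k ≥ 1`, `‖T_ω^k − P_M‖ = c_ω^{2k}`; in particular
`‖T_ω^k − P_M‖ = ‖T_ω − P_M‖^k` and `c_ω ≤ 1`. -/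
theorem stmt_3 {H : Type*} [NormedAddCommGroup H] [InnerProductSpace ℝ H] [CompleteSpace H]
    {ι : Type*} [Countable ι] [Nonempty ι]
    (ω : ι → ℝ) (hω : ∀ i, 0 < ω i) (hωsum : HasSum ω 1)
    (M : ι → Submodule ℝ H) [∀ i, CompleteSpace (M i)]
    [CompleteSpace ↥(⨅ i, M i : Submodule ℝ H)]
    (hMnt : ∀ i, M i ≠ ⊥)
    (T : H →L[ℝ] H)
    (hT : ∀ z : H, T z = ∑' i, ω i • ((Submodule.orthogonalProjectionOnto (M i) z : H)))
    (P : H →L[ℝ] H)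
    (hP : P = (⨅ i, M i : Submodule ℝ H).subtypeL.comp
      (Submodule.orthogonalProjectionOnto (⨅ i, M i : Submodule ℝ H))) :
    (∀ k : ℕ, 1 ≤ k → ‖T ^ k - P‖ = friedrichsCos ω M ^ (2 * k)) ∧
    (∀ k : ℕ, 1 ≤ k → ‖T ^ k - P‖ = ‖T - P‖ ^ k) ∧
    friedrichsCos ω M ≤ 1 := by
  set Q : ι → H →L[ℝ] H := fun i => (M i).starProjection with hQ
  set N : Submodule ℝ H := ⨅ i, M i with hN
  have hPN : P = N.starProjection := hP
  have hNM : ∀ i, N ≤ M i := fun i => iInf_le M i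
  have hωs : Summable ω := hωsum.summable
  have hQsymm : ∀ i a b, ⟪Q i a, b⟫ = ⟪a, Q i b⟫ := fun i a b =>
    (M i).inner_starProjection_left_eq_right a b
  have hQle : ∀ i a, ‖Q i a‖ ≤ ‖a‖ := fun i a => (M i).norm_starProjection_apply_le a
  have hQfix : ∀ i a, a ∈ M i → Q i a = a := fun i a h =>
    Submodule.starProjection_eq_self_iff.mpr h
  have hQmem : ∀ i a, Q i a ∈ M i := fun i a => Submodule.starProjection_apply_mem _ _
  have hTsum : ∀ z, HasSum (fun i => ω i • Q i z) (T z) := by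
    intro z
    have : Summable (fun i => ω i • Q i z) := by
      refine Summable.of_norm_bounded (g := fun i => ω i * ‖z‖) (hωs.mul_right _) ?_
      intro i
      rw [norm_smul, Real.norm_of_nonneg (hω i).le]
      exact mul_le_mul_of_nonneg_left (hQle i z) (hω i).le
    have h := this.hasSum
    rw [hT z]
    exact h
  have hTin : ∀ a b, HasSum (fun i => ω i * ⟪Q i a, b⟫) ⟪T a, b⟫ := by
    intro a b
    have h := (innerSL ℝ b).hasSum (hTsum a)
    simp only [innerSL_apply_apply, inner_smul_right] at h
    simpa only [real_inner_comm] using h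
  have hTsymm : ∀ a b, ⟪T a, b⟫ = ⟪a, T b⟫ := by
    intro a b
    have h1 := hTin a b
    have h2 := hTin b a
    rw [real_inner_comm (T b) a]
    refine h1.unique ?_
    convert h2 using 3 with i
    rw [hQsymm, real_inner_comm]
  have hTsa : IsSelfAdjoint T := by
    rw [ContinuousLinearMap.isSelfAdjoint_iff_isSymmetric]
    exact hTsymm
  have hPsa : IsSelfAdjoint P := by
    rw [hPN]; exact isSelfAdjoint_starProjection N
  have hTP : T * P = P := by
    ext z
    have hz : P z ∈ N := by rw [hPN]; exact Submodule.starProjection_apply_mem _ _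
    have h := hTsum (P z)
    have h' : (fun i => ω i • Q i (P z)) = fun i => ω i • P z := by
      funext i; rw [hQfix i _ (hNM i hz)]
    rw [h'] at h
    have h2 := hωsum.smul_const (P z)
    rw [one_smul] at h2
    exact h.unique h2
  have hPT : P * T = P := by
    have := congrArg star hTP
    rwa [star_mul, hTsa.star_eq, hPsa.star_eq] at this
  have hPP : P * P = P := by
    rw [hPN]; exact N.isIdempotentElem_starProjection
  have hpow : ∀ k : ℕ, 1 ≤ k → T ^ k - P = (T - P) ^ k := by
    intro k hk
    induction k, hk using Nat.le_induction with
    | base => simp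
    | succ n hn ih =>
      have hTnP : T ^ n * P = P := by
        clear ih hn
        induction n with
        | zero => simp
        | succ m ihm => rw [pow_succ, mul_assoc, hTP, ihm]
      rw [pow_succ (T - P), ← ih, sub_mul, mul_sub, mul_sub, hTnP, hPT, hPP, pow_succ]
      abel
  have hSsa : IsSelfAdjoint (T - P) := hTsa.sub hPsa
  have hPzero : ∀ y ∈ Nᗮ, P y = 0 := by
    intro y hy
    rw [hPN, Submodule.starProjection_apply,
      Submodule.orthogonalProjectionOnto_eq_zero_iff.mpr hy]
    rfl
  have hQperp : ∀ i, ∀ y ∈ Nᗮ, Q i y ∈ Nᗮ := by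
    intro i y hy
    rw [Submodule.mem_orthogonal] at hy ⊢
    intro m hm
    rw [← hQsymm, hQfix i m (hNM i hm)]
    exact hy m hm
  have hA : ∀ y, HasSum (fun i => ω i * ‖Q i y‖ ^ 2) ⟪T y, y⟫ := by
    intro y
    convert hTin y y using 3 with i
    rw [← real_inner_self_eq_norm_sq, hQsymm, hQfix i _ (hQmem i y), ← hQsymm]
  -- bounds on members of the set
  have hmem : ∀ (x : ι → H) (y : H), (∀ i, x i ∈ M i) →
      (Summable fun i => ω i * ‖x i‖ ^ 2) → (∑' i, ω i * ‖x i‖ ^ 2) ≤ 1 →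
      ∀ t : ℝ, 2 * t * (∑' i, ω i * ⟪x i, y⟫) ≤ t ^ 2 + ⟪T y, y⟫ := by
    intro x y hx hs h1 t
    have hxQ : ∀ i, ⟪x i, y⟫ = ⟪x i, Q i y⟫ := fun i => by
      rw [← hQsymm, hQfix i _ (hx i)]
    have hb : ∀ i (t : ℝ), 2 * t * ⟪x i, Q i y⟫ ≤ t ^ 2 * ‖x i‖ ^ 2 + ‖Q i y‖ ^ 2 := by
      intro i t
      have h := sq_nonneg ‖t • x i - Q i y‖
      rw [norm_sub_sq_real, norm_smul, inner_smul_left, mul_pow, Real.norm_eq_abs, sq_abs] at h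
      simp only [conj_trivial] at h
      linarith
    have hbs : ∀ t : ℝ, HasSum (fun i => t ^ 2 * (ω i * ‖x i‖ ^ 2) + ω i * ‖Q i y‖ ^ 2)
        (t ^ 2 * (∑' i, ω i * ‖x i‖ ^ 2) + ⟪T y, y⟫) := fun t =>
      (hs.hasSum.mul_left _).add (hA y)
    have hrs : Summable (fun i => ω i * ⟪x i, y⟫) := by
      refine Summable.of_norm_bounded (hbs 1).summable ?_
      intro i
      have h1 := hb i 1
      have h2 := hb i (-1)
      have h3 : |⟪x i, Q i y⟫| ≤ ‖x i‖ ^ 2 + ‖Q i y‖ ^ 2 := by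
        have := sq_nonneg ‖x i‖
        have := sq_nonneg ‖Q i y‖
        rw [abs_le]
        constructor <;> linarith
      rw [norm_mul, Real.norm_of_nonneg (hω i).le, Real.norm_eq_abs, hxQ]
      have := mul_le_mul_of_nonneg_left h3 (hω i).le
      linarith
    have h2 := hasSum_le (f := fun i => 2 * t * (ω i * ⟪x i, y⟫)) (fun i => by
      have := mul_le_mul_of_nonneg_left (hb i t) (hω i).le
      rw [hxQ]
      linarith) (hrs.hasSum.mul_left (2 * t)) (hbs t)
    have := mul_le_mul_of_nonneg_left h1 (sq_nonneg t)
    linarith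
  have hSbd : ∀ y ∈ Nᗮ, ‖y‖ ≤ 1 → ⟪T y, y⟫ ≤ ‖T - P‖ := by
    intro y hy h1
    have h2 : T y = (T - P) y := by simp [hPzero y hy]
    rw [h2]
    calc ⟪(T - P) y, y⟫ ≤ ‖(T - P) y‖ * ‖y‖ := real_inner_le_norm _ _
      _ ≤ (‖T - P‖ * ‖y‖) * ‖y‖ := by gcongr; exact (T - P).le_opNorm y
      _ ≤ (‖T - P‖ * 1) * 1 := by gcongr
      _ = ‖T - P‖ := by ring
  have hTy1 : ∀ y : H, ‖y‖ ≤ 1 → ⟪T y, y⟫ ≤ 1 := by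
    intro y h1
    refine hasSum_le (fun i => ?_) (hA y) hωsum
    have h2 : ‖Q i y‖ ^ 2 ≤ 1 := pow_le_one₀ (norm_nonneg _) ((hQle i y).trans h1)
    have := mul_le_mul_of_nonneg_left h2 (hω i).le
    linarith
  set c := friedrichsCos ω M with hc
  unfold friedrichsCos at hc
  set X : Set ℝ := { r : ℝ | ∃ (x : ι → H) (y : H),
    (∀ i, x i ∈ M i ⊓ (⨅ j, M j)ᗮ) ∧
    (Summable fun i => ω i * ‖x i‖ ^ 2) ∧ (∑' i, ω i * ‖x i‖ ^ 2) ≤ 1 ∧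
    y ∈ (⨅ j, M j)ᗮ ∧ ‖y‖ ≤ 1 ∧
    r = ∑' i, ω i * ⟪x i, y⟫ } with hX
  have hX0 : (0 : ℝ) ∈ X := ⟨fun _ => 0, 0, by simp, by simp, by simp, by simp, by simp, by simp⟩
  have hX1 : ∀ r ∈ X, r ≤ 1 := by
    rintro r ⟨x, y, hx, hs, h1, hy, hy1, rfl⟩
    have := hmem x y (fun i => (hx i).1) hs h1 1
    have := hTy1 y hy1
    linarith
  have hXS : ∀ r ∈ X, r ≤ √‖T - P‖ := by
    rintro r ⟨x, y, hx, hs, h1, hy, hy1, rfl⟩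
    apply Real.le_sqrt_of_sq_le
    have := hmem x y (fun i => (hx i).1) hs h1 (∑' i, ω i * ⟪x i, y⟫)
    have := hSbd y hy hy1
    nlinarith
  have hXb : BddAbove X := ⟨1, hX1⟩
  have hc0 : 0 ≤ c := by rw [hc]; exact le_csSup hXb hX0
  have hc1 : c ≤ 1 := by rw [hc]; exact csSup_le ⟨0, hX0⟩ hX1
  have hcS : c ≤ √‖T - P‖ := by rw [hc]; exact csSup_le ⟨0, hX0⟩ hXS
  have hlow : c ^ 2 ≤ ‖T - P‖ := by
    calc c ^ 2 ≤ (√‖T - P‖) ^ 2 := by gcongr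
      _ = _ := Real.sq_sqrt (norm_nonneg _)
  have hTyb : ∀ y ∈ Nᗮ, ‖T y‖ ≤ c ^ 2 * ‖y‖ := by
    intro y hy
    have hA0 : 0 ≤ ⟪T y, y⟫ := (hA y).nonneg fun i => mul_nonneg (hω i).le (sq_nonneg _)
    rcases eq_or_lt_of_le (norm_nonneg (T y)) with h0 | h0
    · rw [← h0]; positivity
    rcases eq_or_lt_of_le hA0 with hz | hpos
    · exfalso
      have h := hA y
      rw [← hz, hasSum_zero_iff_of_nonneg
        (fun i => mul_nonneg (hω i).le (sq_nonneg _))] at h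
      have hq : ∀ i, Q i y = 0 := by
        intro i
        have h1 := congrFun h i
        simpa [(hω i).ne'] using h1
      have h2 := hTsum y
      simp only [hq, smul_zero] at h2
      have h3 := h2.unique hasSum_zero
      rw [h3, norm_zero] at h0
      exact lt_irrefl _ h0
    · set A := ⟪T y, y⟫ with hAdef
      have hsA : 0 < √A := Real.sqrt_pos.mpr hpos
      have hTperp : T y ∈ Nᗮ := by
        rw [Submodule.mem_orthogonal]
        intro m hm
        have h1 : P m = m := by rw [hPN]; exact Submodule.starProjection_eq_self_iff.mpr hm
        have h2 : T m = m := by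
          have := congrArg (fun L : H →L[ℝ] H => L m) hTP
          simpa [h1] using this
        rw [← hTsymm, h2]
        exact hy m hm
      have hn : HasSum (fun i => ω i * ‖(√A)⁻¹ • Q i y‖ ^ 2) 1 := by
        have h := (hA y).mul_left ((√A)⁻¹ ^ 2)
        have e1 : (√A)⁻¹ ^ 2 * ⟪T y, y⟫ = 1 := by
          rw [inv_pow, Real.sq_sqrt hA0, ← hAdef]
          exact inv_mul_cancel₀ hpos.ne'
        rw [e1] at h
        refine (congrArg (fun f => HasSum f (1 : ℝ)) (funext fun i => ?_)).mp h
        rw [norm_smul, mul_pow, norm_inv, Real.norm_of_nonneg hsA.le]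
        ring
      have hr : HasSum (fun i => ω i * ⟪(√A)⁻¹ • Q i y, ‖T y‖⁻¹ • T y⟫) ((√A)⁻¹ * ‖T y‖) := by
        have h := (hTin y (T y)).mul_left ((√A)⁻¹ * ‖T y‖⁻¹)
        have e1 : (√A)⁻¹ * ‖T y‖⁻¹ * ⟪T y, T y⟫ = (√A)⁻¹ * ‖T y‖ := by
          rw [real_inner_self_eq_norm_sq]
          field_simp
        rw [e1] at h
        refine (congrArg (fun f => HasSum f ((√A)⁻¹ * ‖T y‖)) (funext fun i => ?_)).mp h
        rw [inner_smul_left, inner_smul_right]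
        simp only [conj_trivial]
        ring
      have hin : (√A)⁻¹ * ‖T y‖ ∈ X := by
        refine ⟨fun i => (√A)⁻¹ • Q i y, ‖T y‖⁻¹ • T y, fun i => ⟨?_, ?_⟩, hn.summable,
          hn.tsum_eq.le, ?_, ?_, hr.tsum_eq.symm⟩
        · exact (M i).smul_mem _ (hQmem i y)
        · exact Submodule.smul_mem _ _ (hQperp i y hy)
        · exact Submodule.smul_mem _ _ hTperp
        · rw [norm_smul, norm_inv, norm_norm, inv_mul_cancel₀ h0.ne']
      have h1 : (√A)⁻¹ * ‖T y‖ ≤ c := by rw [hc]; exact le_csSup hXb hin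
      have h2 : ‖T y‖ ≤ c * √A := by
        rwa [inv_mul_le_iff₀ hsA, mul_comm] at h1
      have h3 : ‖T y‖ ^ 2 ≤ c ^ 2 * A := by
        calc ‖T y‖ ^ 2 ≤ (c * √A) ^ 2 := by gcongr
          _ = _ := by rw [mul_pow, Real.sq_sqrt hA0]
      have h4 : A ≤ ‖T y‖ * ‖y‖ := real_inner_le_norm _ _
      have h5 : ‖T y‖ * ‖T y‖ ≤ ‖T y‖ * (c ^ 2 * ‖y‖) := by
        have := mul_le_mul_of_nonneg_left h4 (sq_nonneg c)
        linarith
      exact le_of_mul_le_mul_left h5 h0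
  have hup : ‖T - P‖ ≤ c ^ 2 := by
    refine ContinuousLinearMap.opNorm_le_bound _ (sq_nonneg c) fun z => ?_
    have hyperp : z - P z ∈ Nᗮ := by
      rw [hPN]; exact Submodule.sub_starProjection_mem_orthogonal z
    have e : (T - P) z = T (z - P z) := by
      have := congrArg (fun L : H →L[ℝ] H => L z) hTP
      simp only [mul_apply_eq_comp] at this
      rw [map_sub, this]; rfl
    rw [e]
    refine (hTyb _ hyperp).trans ?_
    refine mul_le_mul_of_nonneg_left ?_ (sq_nonneg c)
    have h1 : ‖z - P z‖ = ‖Nᗮ.starProjection z‖ := by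
      rw [hPN, Submodule.starProjection_orthogonal_val]
    rw [h1]
    exact Submodule.norm_starProjection_apply_le _ _
  have hS : ‖T - P‖ = c ^ 2 := le_antisymm hup hlow
  have hmain : ∀ k : ℕ, 1 ≤ k → ‖T ^ k - P‖ = ‖T - P‖ ^ k := fun k hk => by
    rw [hpow k hk, aux_norm_pow hSsa k hk]
  refine ⟨fun k hk => ?_, hmain, hc1⟩
  rw [hmain k hk, hS, pow_mul]
end

section
/- The following are equivalent: (i) ‖T_ω − P_M‖ < 1 (operator norm in B(H)); (ii) the Friedrichs cosine satisfies c_ω < 1; (iii) the set A_ω = { ∑ᵢ ω i • xᵢ : xᵢ ∈ Mᵢ^⊥ for all i, ∑ᵢ ω i ‖xᵢ‖² < ∞ } is closed in H. -/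
open RealInnerProductSpace

namespace Aux14

variable {H : Type*} [NormedAddCommGroup H] [InnerProductSpace ℝ H]
    {ι : Type*}

lemma proj_inner (K : Submodule ℝ H) [K.HasOrthogonalProjection] (y : H) :
    ⟪K.starProjection y, y⟫ = ‖K.starProjection y‖ ^ 2 := by
  have h := K.starProjection_inner_eq_zero y (K.starProjection y)
    (K.starProjection_apply_mem y)
  rw [inner_sub_left, real_inner_self_eq_norm_sq, real_inner_comm] at h
  linarith

lemma proj_norm (K : Submodule ℝ H) [K.HasOrthogonalProjection] (y : H) :
    ‖y - K.starProjection y‖ ^ 2 = ‖y‖ ^ 2 - ‖K.starProjection y‖ ^ 2 := by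
  rw [norm_sub_sq_real, real_inner_comm, proj_inner]; ring

lemma young (a b : H) : ⟪a, b⟫ ≤ (‖a‖ ^ 2 + ‖b‖ ^ 2) / 2 := by
  have := real_inner_le_norm a b
  nlinarith [sq_nonneg (‖a‖ - ‖b‖)]

lemma summable_smul [CompleteSpace H] {ω : ι → ℝ} (hω : ∀ i, 0 < ω i) (hs : Summable ω) {x : ι → H}
    (hx : Summable fun i => ω i * ‖x i‖ ^ 2) : Summable fun i => ω i • x i := by
  apply Summable.of_norm_bounded (hs.add hx)
  intro i
  rw [norm_smul, Real.norm_of_nonneg (hω i).le]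
  nlinarith [hω i, sq_nonneg (‖x i‖ - 1), norm_nonneg (x i), mul_nonneg (hω i).le (sq_nonneg (‖x i‖ - 1))]

lemma hasSum_inner [CompleteSpace H] {ω : ι → ℝ} (hω : ∀ i, 0 < ω i) (hs : Summable ω) {x : ι → H}
    (hx : Summable fun i => ω i * ‖x i‖ ^ 2) (y : H) :
    HasSum (fun i => ω i * ⟪x i, y⟫) ⟪∑' i, ω i • x i, y⟫ := by
  have h := (summable_smul hω hs hx).hasSum.mapL (innerSL ℝ y)
  simpa [inner_smul_right, real_inner_comm] using h

lemma summable_proj {ω : ι → ℝ} (hω : ∀ i, 0 < ω i) (hs : Summable ω)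
    (M : ι → Submodule ℝ H) [∀ i, (M i).HasOrthogonalProjection] (y : H) :
    Summable fun i => ω i * ‖(M i).starProjection y‖ ^ 2 := by
  refine Summable.of_nonneg_of_le (fun i => mul_nonneg (hω i).le (sq_nonneg _)) (fun i => ?_)
    (hs.mul_right (‖y‖ ^ 2))
  have := (M i).norm_starProjection_apply_le y
  have := hω i
  gcongr

/-- the quadratic form of the simultaneous projection -/
noncomputable def E (ω : ι → ℝ) (M : ι → Submodule ℝ H) [∀ i, (M i).HasOrthogonalProjection]
    (y : H) : ℝ := ∑' i, ω i * ‖(M i).starProjection y‖ ^ 2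

lemma E_smul (ω : ι → ℝ) (M : ι → Submodule ℝ H) [∀ i, (M i).HasOrthogonalProjection]
    (t : ℝ) (y : H) : E ω M (t • y) = t ^ 2 * E ω M y := by
  unfold E
  rw [← tsum_mul_left]
  congr 1; ext i
  rw [map_smul, norm_smul, mul_pow, Real.norm_eq_abs, sq_abs]; ring

lemma hasSum_E {ω : ι → ℝ} (hω : ∀ i, 0 < ω i) (hs : Summable ω)
    (M : ι → Submodule ℝ H) [∀ i, (M i).HasOrthogonalProjection] (y : H) :
    HasSum (fun i => ω i * ‖(M i).starProjection y‖ ^ 2) (E ω M y) :=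
  (summable_proj hω hs M y).hasSum

lemma hasSum_F {ω : ι → ℝ} (hω : ∀ i, 0 < ω i) (hs : HasSum ω 1)
    (M : ι → Submodule ℝ H) [∀ i, (M i).HasOrthogonalProjection] (y : H) :
    HasSum (fun i => ω i * ‖y - (M i).starProjection y‖ ^ 2) (‖y‖ ^ 2 - E ω M y) := by
  have h := (hs.mul_right (‖y‖ ^ 2)).sub (hasSum_E hω hs.summable M y)
  rw [one_mul] at h
  simp only [proj_norm, mul_sub]
  exact h

lemma E_le {ω : ι → ℝ} (hω : ∀ i, 0 < ω i) (hs : HasSum ω 1)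
    (M : ι → Submodule ℝ H) [∀ i, (M i).HasOrthogonalProjection] (y : H) :
    E ω M y ≤ ‖y‖ ^ 2 := by
  have := (hasSum_F hω hs M y).nonneg (fun i => mul_nonneg (hω i).le (sq_nonneg _))
  linarith

lemma proj_mem_orth (M : ι → Submodule ℝ H) [∀ i, (M i).HasOrthogonalProjection] {y : H}
    (hy : y ∈ (⨅ j, M j)ᗮ) (i : ι) : (M i).starProjection y ∈ (⨅ j, M j)ᗮ := by
  rw [Submodule.mem_orthogonal] at hy ⊢
  intro u hu
  rw [← Submodule.inner_starProjection_left_eq_right,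
    Submodule.starProjection_eq_self_iff.2 ((Submodule.mem_iInf _).1 hu i)]
  exact hy u hu

/-- the coercivity condition -/
def K (ω : ι → ℝ) (M : ι → Submodule ℝ H) [∀ i, (M i).HasOrthogonalProjection] : Prop :=
  ∃ κ < 1, ∀ y ∈ (⨅ j, M j)ᗮ, E ω M y ≤ κ * ‖y‖ ^ 2

variable {ω : ι → ℝ}

lemma cos_elem (hω : ∀ i, 0 < ω i) (hs : HasSum ω 1) [CompleteSpace H]
    (M : ι → Submodule ℝ H) [∀ i, (M i).HasOrthogonalProjection] {x : ι → H} {y : H}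
    (hx : ∀ i, x i ∈ M i ⊓ (⨅ j, M j)ᗮ)
    (hsx : Summable fun i => ω i * ‖x i‖ ^ 2) (h1 : (∑' i, ω i * ‖x i‖ ^ 2) ≤ 1) :
    ∑' i, ω i * ⟪x i, y⟫ ≤ (1 + E ω M y) / 2 := by
  have h := hasSum_le (fun i => ?_) (hasSum_inner hω hs.summable hsx y)
    ((hsx.hasSum.add (hasSum_E hω hs.summable M y)).div_const 2)
  · rw [(hasSum_inner hω hs.summable hsx y).tsum_eq]
    linarith
  · have h1 : ⟪x i, y⟫ = ⟪x i, (M i).starProjection y⟫ := by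
      rw [← Submodule.inner_starProjection_left_eq_right,
        Submodule.starProjection_eq_self_iff.2 (hx i).1]
    rw [h1]
    have := mul_le_mul_of_nonneg_left (young (x i) ((M i).starProjection y)) (hω i).le
    linarith

lemma cos_iff (hω : ∀ i, 0 < ω i) (hs : HasSum ω 1) [CompleteSpace H]
    (M : ι → Submodule ℝ H) [∀ i, (M i).HasOrthogonalProjection] :
    friedrichsCos ω M < 1 ↔ K ω M := by
  constructor
  · intro h
    refine ⟨_, h, ?_⟩
    have key : ∀ y ∈ (⨅ j, M j)ᗮ, ‖y‖ ≤ 1 → E ω M y ≤ friedrichsCos ω M := by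
      intro y hy hy1
      apply le_csSup
      · refine ⟨1, ?_⟩
        rintro r ⟨x, y, hx, hsx, h1, hy, hy1, rfl⟩
        have a := cos_elem hω hs M (y := y) hx hsx h1
        have b := E_le hω hs M y
        nlinarith [norm_nonneg y]
      · refine ⟨fun i => (M i).starProjection y, y, fun i =>
          ⟨(M i).starProjection_apply_mem y, proj_mem_orth M hy i⟩,
          summable_proj hω hs.summable M y, ?_, hy, hy1, ?_⟩
        · have b := E_le hω hs M y
          unfold E at b
          nlinarith [norm_nonneg y]
        · simp only [proj_inner]; rfl
    intro y hy
    by_cases h0 : y = 0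
    · subst h0; simp [E]
    have hn : 0 < ‖y‖ := norm_pos_iff.2 h0
    have := key (‖y‖⁻¹ • y) (Submodule.smul_mem _ _ hy) (by
      rw [norm_smul, norm_inv, norm_norm, inv_mul_cancel₀ hn.ne'])
    rw [E_smul, inv_pow, inv_mul_le_iff₀ (by positivity)] at this
    linarith
  · rintro ⟨κ, hκ, h⟩
    refine lt_of_le_of_lt (b := (1 + max κ 0) / 2) ?_ (by
      have : max κ 0 < 1 := max_lt hκ one_pos
      linarith)
    apply csSup_le
    · exact ⟨0, fun _ => 0, 0, by simp⟩
    · rintro r ⟨x, y, hx, hsx, h1, hy, hy1, rfl⟩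
      have a := cos_elem hω hs M (y := y) hx hsx h1
      have b := h y hy
      have c : κ * ‖y‖ ^ 2 ≤ max κ 0 * 1 := by
        have : ‖y‖ ^ 2 ≤ 1 := by nlinarith [norm_nonneg y]
        exact mul_le_mul (le_max_left _ _) this (sq_nonneg _) (le_max_right _ _)
      linarith

lemma T_facts (hω : ∀ i, 0 < ω i) (hs : HasSum ω 1) [CompleteSpace H]
    (M : ι → Submodule ℝ H) [∀ i, (M i).HasOrthogonalProjection] (T : H →L[ℝ] H)
    (hT : ∀ z : H, T z = ∑' i, ω i • ((M i).starProjection z)) (y w : H) :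
    HasSum (fun i => ω i * ⟪(M i).starProjection y, w⟫) ⟪T y, w⟫ := by
  rw [hT]
  exact hasSum_inner hω hs.summable (summable_proj hω hs.summable M y) w

lemma T_inner (hω : ∀ i, 0 < ω i) (hs : HasSum ω 1) [CompleteSpace H]
    (M : ι → Submodule ℝ H) [∀ i, (M i).HasOrthogonalProjection] (T : H →L[ℝ] H)
    (hT : ∀ z : H, T z = ∑' i, ω i • ((M i).starProjection z)) (y : H) :
    ⟪T y, y⟫ = E ω M y := by
  rw [← (T_facts hω hs M T hT y y).tsum_eq]
  simp only [proj_inner]; rfl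

lemma T_sq (hω : ∀ i, 0 < ω i) (hs : HasSum ω 1) [CompleteSpace H]
    (M : ι → Submodule ℝ H) [∀ i, (M i).HasOrthogonalProjection] (T : H →L[ℝ] H)
    (hT : ∀ z : H, T z = ∑' i, ω i • ((M i).starProjection z)) (y : H) :
    ‖T y‖ ^ 2 ≤ E ω M y := by
  have h := hasSum_le (fun i => ?_) (T_facts hω hs M T hT y (T y))
    (((hasSum_E hω hs.summable M y).add (hs.mul_right (‖T y‖ ^ 2))).div_const 2)
  · rw [real_inner_self_eq_norm_sq] at h
    linarith
  · have := mul_le_mul_of_nonneg_left (young ((M i).starProjection y) (T y)) (hω i).le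
    linarith

lemma norm_iff (hω : ∀ i, 0 < ω i) (hs : HasSum ω 1) [CompleteSpace H]
    (M : ι → Submodule ℝ H) [∀ i, (M i).HasOrthogonalProjection]
    [(⨅ i, M i).HasOrthogonalProjection] (T : H →L[ℝ] H)
    (hT : ∀ z : H, T z = ∑' i, ω i • ((M i).starProjection z)) :
    ‖T - (⨅ i, M i).starProjection‖ < 1 ↔ K ω M := by
  set P := (⨅ i, M i).starProjection with hP
  constructor
  · intro h
    refine ⟨_, h, fun y hy => ?_⟩
    have h0 : P y = 0 := (Submodule.starProjection_apply_eq_zero_iff _).2 hy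
    have h1 : (T - P) y = T y := by simp [h0]
    rw [← T_inner hω hs M T hT y, ← h1]
    refine (real_inner_le_norm _ _).trans ?_
    have := (T - P).le_opNorm y
    nlinarith [norm_nonneg y]
  · rintro ⟨κ, hκ, h⟩
    have hm : max κ 0 < 1 := max_lt hκ one_pos
    refine lt_of_le_of_lt (b := √(max κ 0)) ?_ (by
      rw [Real.sqrt_lt' one_pos]; simpa using hm)
    refine ContinuousLinearMap.opNorm_le_bound _ (Real.sqrt_nonneg _) fun z => ?_
    have hy : z - P z ∈ (⨅ j, M j)ᗮ := Submodule.sub_starProjection_mem_orthogonal z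
    have hTP : T (P z) = P z := by
      rw [hT]
      have : ∀ i, (M i).starProjection (P z) = P z := fun i =>
        Submodule.starProjection_eq_self_iff.2
          ((Submodule.mem_iInf _).1 ((⨅ i, M i).starProjection_apply_mem z) i)
      simp only [this]
      exact ((hs.smul_const (P z)).tsum_eq).trans (one_smul _ _)
    have e : (T - P) z = T (z - P z) := by simp [hTP]
    rw [e]
    have h2 : ‖z - P z‖ ^ 2 ≤ ‖z‖ ^ 2 := by
      rw [hP, proj_norm]; linarith [sq_nonneg ‖(⨅ i, M i).starProjection z‖]
    apply le_of_sq_le_sq _ (by positivity)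
    rw [mul_pow, Real.sq_sqrt (le_max_right _ _)]
    calc _ ≤ _ := T_sq hω hs M T hT _
      _ ≤ _ := h _ hy
      _ ≤ _ := mul_le_mul (le_max_left _ _) h2 (sq_nonneg _) (le_max_right _ _)

/-- the submodule `A_ω` -/
def A [CompleteSpace H] (hω : ∀ i, 0 < ω i) (hs : HasSum ω 1) (M : ι → Submodule ℝ H) :
    Submodule ℝ H where
  carrier := { y : H | ∃ x : ι → H, (∀ i, x i ∈ (M i)ᗮ) ∧
        (Summable fun i => ω i * ‖x i‖ ^ 2) ∧ y = ∑' i, ω i • x i }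
  zero_mem' := ⟨fun _ => 0, by simp⟩
  add_mem' := by
    rintro _ _ ⟨x, hx, sx, rfl⟩ ⟨y, hy, sy, rfl⟩
    refine ⟨fun i => x i + y i, fun i => add_mem (hx i) (hy i), ?_, ?_⟩
    · refine Summable.of_nonneg_of_le (fun i => mul_nonneg (hω i).le (sq_nonneg _)) (fun i => ?_)
        ((sx.add sy).mul_left 2)
      have h1 : ‖x i + y i‖ ^ 2 ≤ 2 * (‖x i‖ ^ 2 + ‖y i‖ ^ 2) := by
        rw [norm_add_sq_real]; linarith [young (x i) (y i)]
      have := mul_le_mul_of_nonneg_left h1 (hω i).le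
      linarith
    · rw [← (summable_smul hω hs.summable sx).tsum_add (summable_smul hω hs.summable sy)]
      simp only [smul_add]
  smul_mem' := by
    rintro c _ ⟨x, hx, sx, rfl⟩
    refine ⟨fun i => c • x i, fun i => Submodule.smul_mem _ _ (hx i), ?_, ?_⟩
    · refine (sx.mul_left (c ^ 2)).congr fun i => ?_
      rw [norm_smul, mul_pow, Real.norm_eq_abs, sq_abs]; ring
    · rw [← (summable_smul hω hs.summable sx).tsum_const_smul]
      simp only [smul_comm c]

lemma A_le [CompleteSpace H] (hω : ∀ i, 0 < ω i) (hs : HasSum ω 1) (M : ι → Submodule ℝ H) :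
    A hω hs M ≤ (⨅ i, M i)ᗮ := by
  rintro _ ⟨x, hx, sx, rfl⟩
  rw [Submodule.mem_orthogonal']
  intro u hu
  rw [← (hasSum_inner hω hs.summable sx u).tsum_eq]
  have : ∀ i, ⟪x i, u⟫ = 0 := fun i =>
    (Submodule.mem_orthogonal' _ _).1 (hx i) u ((Submodule.mem_iInf _).1 hu i)
  simp [this]

lemma A_orth [CompleteSpace H] (hω : ∀ i, 0 < ω i) (hs : HasSum ω 1) (M : ι → Submodule ℝ H)
    [∀ i, (M i).HasOrthogonalProjection] :
    (A hω hs M)ᗮ ≤ ⨅ i, M i := by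
  classical
  intro y hy
  rw [Submodule.mem_iInf]
  intro i
  rw [← Submodule.orthogonal_orthogonal (M i), Submodule.mem_orthogonal]
  intro u hu
  have hm : ω i • u ∈ A hω hs M := by
    refine ⟨Pi.single i u, fun j => ?_, ?_, ?_⟩
    · rcases eq_or_ne j i with rfl | hj
      · simpa using hu
      · simp [Pi.single_eq_of_ne hj]
    · refine summable_of_ne_finset_zero (s := {i}) fun j hj => ?_
      rw [Pi.single_eq_of_ne (by simpa using hj)]; simp
    · rw [tsum_eq_single i (fun j hj => by rw [Pi.single_eq_of_ne hj]; simp)]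
      simp
  have := (Submodule.mem_orthogonal _ _).1 hy _ hm
  rw [inner_smul_left] at this
  simpa [(hω i).ne'] using this

lemma closed_of_norm (hω : ∀ i, 0 < ω i) (hs : HasSum ω 1) [CompleteSpace H]
    (M : ι → Submodule ℝ H) [∀ i, (M i).HasOrthogonalProjection]
    [(⨅ i, M i).HasOrthogonalProjection] (T : H →L[ℝ] H)
    (hT : ∀ z : H, T z = ∑' i, ω i • ((M i).starProjection z))
    (h : ‖T - (⨅ i, M i).starProjection‖ < 1) : IsClosed (A hω hs M : Set H) := by
  have e : A hω hs M = (⨅ i, M i)ᗮ := by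
    refine le_antisymm (A_le hω hs M) fun z hz => ?_
    obtain ⟨u, hu⟩ := isUnit_one_sub_of_norm_lt_one h
    obtain ⟨y, hy⟩ : ∃ y, (1 - (T - (⨅ i, M i).starProjection)) y = z := by
      refine ⟨(↑u⁻¹ : H →L[ℝ] H) z, ?_⟩
      rw [← hu, ← ContinuousLinearMap.mul_apply, Units.mul_inv]; rfl
    have hA : y - T y ∈ A hω hs M := by
      refine ⟨fun i => y - (M i).starProjection y,
        fun i => Submodule.sub_starProjection_mem_orthogonal y, (hasSum_F hω hs M y).summable, ?_⟩
      simp only [smul_sub]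
      rw [(hs.summable.smul_const y).tsum_sub
        (summable_smul hω hs.summable (summable_proj hω hs.summable M y)), ← hT,
        (hs.smul_const y).tsum_eq, one_smul]
    have hyz : y - T y + (⨅ i, M i).starProjection y = z := by
      rw [← hy]; simp; abel
    have h1 : (⨅ i, M i).starProjection y ∈ (⨅ i, M i)ᗮ := by
      have : (⨅ i, M i).starProjection y = z - (y - T y) := by rw [← hyz]; abel
      rw [this]
      exact sub_mem hz (A_le hω hs M hA)
    have h2 : (⨅ i, M i).starProjection y = 0 := by
      have := (Submodule.mem_orthogonal _ _).1 h1 _ ((⨅ i, M i).starProjection_apply_mem y)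
      exact inner_self_eq_zero.1 this
    rw [h2, add_zero] at hyz
    rwa [← hyz]
  rw [e]
  exact Submodule.isClosed_orthogonal _

lemma K_of_closed (hω : ∀ i, 0 < ω i) (hs : HasSum ω 1) [CompleteSpace H]
    (M : ι → Submodule ℝ H) [∀ i, (M i).HasOrthogonalProjection]
    [(⨅ i, M i).HasOrthogonalProjection]
    (h : IsClosed (A hω hs M : Set H)) : K ω M := by
  have e : (⨅ i, M i)ᗮ ≤ A hω hs M := by
    have : CompleteSpace (A hω hs M) := h.completeSpace_coe
    rw [← Submodule.orthogonal_orthogonal (A hω hs M)]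
    exact Submodule.orthogonal_le (A_orth hω hs M)
  let g : {y : H // y ∈ (⨅ i, M i)ᗮ ∧ ‖y‖ ^ 2 - E ω M y ≤ 1} → H →L[ℝ] ℝ :=
    fun y => innerSL ℝ (y : H)
  have hA : ∀ a ∈ A hω hs M, ∃ C, ∀ y : H, ‖y‖ ^ 2 - E ω M y ≤ 1 → ⟪y, a⟫ ≤ C := by
    rintro _ ⟨x, hx, sx, rfl⟩
    refine ⟨((∑' i, ω i * ‖x i‖ ^ 2) + 1) / 2, fun y hy => ?_⟩
    have h := hasSum_le (fun i => ?_) (hasSum_inner hω hs.summable sx y)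
      ((sx.hasSum.add (hasSum_F hω hs M y)).div_const 2)
    · rw [real_inner_comm]
      linarith
    · have h1 : ⟪x i, y⟫ = ⟪x i, y - (M i).starProjection y⟫ := by
        rw [inner_sub_right, (Submodule.mem_orthogonal' _ _).1 (hx i) _
          ((M i).starProjection_apply_mem y), sub_zero]
      rw [h1]
      have := mul_le_mul_of_nonneg_left (young (x i) (y - (M i).starProjection y)) (hω i).le
      linarith
  obtain ⟨C, hC⟩ := banach_steinhaus (g := g) (by
    intro z
    have hz : z - (⨅ i, M i).starProjection z ∈ A hω hs M :=
      e (Submodule.sub_starProjection_mem_orthogonal z)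
    obtain ⟨C1, h1⟩ := hA _ hz
    obtain ⟨C2, h2⟩ := hA _ (neg_mem hz)
    refine ⟨max C1 C2, ?_⟩
    rintro ⟨y, hy, hy1⟩
    have e1 : g ⟨y, hy, hy1⟩ z = ⟪y, z - (⨅ i, M i).starProjection z⟫ := by
      rw [inner_sub_right, (Submodule.mem_orthogonal' _ _).1 hy _
          ((⨅ i, M i).starProjection_apply_mem z), sub_zero]
      rfl
    have a := h1 y hy1
    have b := h2 y hy1
    rw [inner_neg_right] at b
    rw [e1, Real.norm_eq_abs]
    exact abs_le'.2 ⟨a.trans (le_max_left _ _), b.trans (le_max_right _ _)⟩)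
  have hC' : ∀ y ∈ (⨅ i, M i)ᗮ, ‖y‖ ^ 2 - E ω M y ≤ 1 → ‖y‖ ≤ C := by
    intro y hy hy1
    have := hC ⟨y, hy, hy1⟩
    simpa [g] using this
  have hC0 : 0 ≤ C := by
    have := hC' 0 (zero_mem _) (by simp [E])
    simpa using this
  refine ⟨1 - 1 / (C + 1) ^ 2, by
    have : 0 < 1 / (C + 1) ^ 2 := by positivity
    linarith, fun y hy => ?_⟩
  by_contra! hlt
  have h0 : y ≠ 0 := by
    rintro rfl
    simp [E] at hlt
  have hn : 0 < ‖y‖ := norm_pos_iff.2 h0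
  have hny : ‖((C + 1) / ‖y‖) • y‖ = C + 1 := by
    rw [norm_smul, Real.norm_of_nonneg (by positivity)]
    field_simp
  have := hC' (((C + 1) / ‖y‖) • y) (Submodule.smul_mem _ _ hy) (by
    rw [hny, E_smul]
    have h3 : ((C + 1) / ‖y‖) ^ 2 * ((1 - 1 / (C + 1) ^ 2) * ‖y‖ ^ 2) = (C + 1) ^ 2 - 1 := by
      field_simp
    have h4 := mul_le_mul_of_nonneg_left hlt.le (sq_nonneg ((C + 1) / ‖y‖))
    linarith)
  rw [hny] at this
  linarith

end Aux14

/-- For the simultaneous projection operator `T_ω` (as a bounded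
operator) and `P_M`, the following are equivalent: (i) `‖T_ω − P_M‖ < 1`;
(ii) `c_ω < 1`; (iii) `A_ω` is closed in `H`. -/
theorem stmt_14 {H : Type*} [NormedAddCommGroup H] [InnerProductSpace ℝ H] [CompleteSpace H]
    {ι : Type*} [Countable ι] [Nonempty ι]
    (ω : ι → ℝ) (hω : ∀ i, 0 < ω i) (hωsum : HasSum ω 1)
    (M : ι → Submodule ℝ H) [∀ i, CompleteSpace (M i)]
    [CompleteSpace ↥(⨅ i, M i : Submodule ℝ H)]
    (hMnt : ∀ i, M i ≠ ⊥)
    (T : H →L[ℝ] H)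
    (hT : ∀ z : H, T z = ∑' i, ω i • ((Submodule.orthogonalProjectionOnto (M i) z : H)))
    (P : H →L[ℝ] H)
    (hP : P = (⨅ i, M i : Submodule ℝ H).subtypeL.comp
      (Submodule.orthogonalProjectionOnto (⨅ i, M i : Submodule ℝ H))) :
    (‖T - P‖ < 1 ↔ friedrichsCos ω M < 1) ∧
    (friedrichsCos ω M < 1 ↔
      IsClosed { y : H | ∃ x : ι → H, (∀ i, x i ∈ (M i)ᗮ) ∧
        (Summable fun i => ω i * ‖x i‖ ^ 2) ∧ y = ∑' i, ω i • x i }) := by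
  have hT' : ∀ z : H, T z = ∑' i, ω i • ((M i).starProjection z) := hT
  have hP' : P = (⨅ i, M i : Submodule ℝ H).starProjection := hP
  have h1 := Aux14.norm_iff hω hωsum M T hT'
  have h2 := Aux14.cos_iff hω hωsum M
  rw [hP']
  refine ⟨h1.trans h2.symm, fun h => ?_, fun h => ?_⟩
  · exact Aux14.closed_of_norm hω hωsum M T hT' (h1.2 (h2.1 h))
  · exact h2.2 (Aux14.K_of_closed hω hωsum M h)
end

section
/- If the set A_ω = { ∑ᵢ ω i • xᵢ : xᵢ ∈ Mᵢ^⊥ for all i, ∑ᵢ ω i ‖xᵢ‖² < ∞ } is closed in H, then c_ω < 1 and the simultaneous projection method converges linearly: for every x ∈ H and every integer k ≥ 1, ‖T_ω^k x − P_M x‖ ≤ c_ω^{2k} · ‖x‖. -/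
open RealInnerProductSpace

section Helpers

variable {H : Type*} [NormedAddCommGroup H] [InnerProductSpace ℝ H] {ι : Type*}

theorem aux_cs (ω : ι → ℝ) (hω : ∀ i, 0 < ω i) (x z : ι → H)
    (hx : Summable fun i => ω i * ‖x i‖ ^ 2) (hz : Summable fun i => ω i * ‖z i‖ ^ 2) :
    (Summable fun i => ω i * ⟪x i, z i⟫) ∧
    (∑' i, ω i * ⟪x i, z i⟫) ^ 2 ≤ (∑' i, ω i * ‖x i‖ ^ 2) * (∑' i, ω i * ‖z i‖ ^ 2) := by
  have hs : Summable fun i => ω i * ⟪x i, z i⟫ := by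
    refine Summable.of_norm_bounded (hx.add hz) fun i => ?_
    rw [Real.norm_eq_abs, abs_mul, abs_of_pos (hω i), ← mul_add]
    refine mul_le_mul_of_nonneg_left ?_ (hω i).le
    have := abs_real_inner_le_norm (x i) (z i)
    nlinarith [sq_nonneg (‖x i‖ - ‖z i‖), sq_nonneg ‖x i‖, sq_nonneg ‖z i‖]
  refine ⟨hs, ?_⟩
  have key : ∀ t : ℝ, 0 ≤ (∑' i, ω i * ‖x i‖ ^ 2) * (t * t) +
      (2 * ∑' i, ω i * ⟪x i, z i⟫) * t + (∑' i, ω i * ‖z i‖ ^ 2) := by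
    intro t
    have h1 := ((hx.hasSum.mul_right (t * t)).add
      ((hs.hasSum.mul_left 2).mul_right t)).add hz.hasSum
    refine h1.nonneg fun i => ?_
    have : ω i * ‖x i‖ ^ 2 * (t * t) + 2 * (ω i * ⟪x i, z i⟫) * t + ω i * ‖z i‖ ^ 2
        = ω i * ‖t • x i + z i‖ ^ 2 := by
      rw [norm_add_sq_real, norm_smul, real_inner_smul_left, mul_pow, Real.norm_eq_abs, sq_abs]
      ring
    rw [this]
    have := hω i
    positivity
  have := discrim_le_zero key
  unfold discrim at this
  nlinarith

theorem aux_summable (ω : ι → ℝ) (hω : ∀ i, 0 < ω i) (hωs : Summable ω) [CompleteSpace H]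
    (x : ι → H) (hx : Summable fun i => ω i * ‖x i‖ ^ 2) : Summable fun i => ω i • x i := by
  refine Summable.of_norm_bounded (hωs.add hx) fun i => ?_
  rw [norm_smul, Real.norm_eq_abs, abs_of_pos (hω i)]
  have := hω i
  have h2 : ‖x i‖ ≤ 1 + ‖x i‖ ^ 2 := by nlinarith [sq_nonneg (‖x i‖ - 1), norm_nonneg (x i)]
  nlinarith

theorem aux_inner (ω : ι → ℝ) (x : ι → H) (hx : Summable fun i => ω i • x i) (y : H) :
    ⟪∑' i, ω i • x i, y⟫ = ∑' i, ω i * ⟪x i, y⟫ := by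
  have := (hx.hasSum.mapL (innerSL ℝ y)).tsum_eq
  rw [real_inner_comm, ← innerSL_apply_apply ℝ, ← this]
  refine tsum_congr fun i => ?_
  rw [innerSL_apply_apply, real_inner_smul_right, real_inner_comm]

theorem aux_norm (ω : ι → ℝ) (hω : ∀ i, 0 < ω i) (hωs : HasSum ω 1) [CompleteSpace H]
    (x : ι → H) (hx : Summable fun i => ω i * ‖x i‖ ^ 2) :
    ‖∑' i, ω i • x i‖ ^ 2 ≤ ∑' i, ω i * ‖x i‖ ^ 2 := by
  have h1 := aux_inner ω x (aux_summable ω hω hωs.summable x hx) (∑' i, ω i • x i)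
  set y := ∑' i, ω i • x i
  have h2 := (aux_cs ω hω x (fun _ => y) hx (hωs.summable.mul_right _)).2
  rw [← h1, tsum_mul_right, hωs.tsum_eq, one_mul, real_inner_self_eq_norm_sq] at h2
  by_cases hy : ‖y‖ = 0
  · rw [hy]
    have : 0 ≤ ∑' i, ω i * ‖x i‖ ^ 2 := tsum_nonneg fun i => by have := hω i; positivity
    simpa using this
  · have : 0 < ‖y‖ ^ 2 := by positivity
    nlinarith

theorem aux_proj_summable (ω : ι → ℝ) (hω : ∀ i, 0 < ω i) (hωs : HasSum ω 1) [CompleteSpace H]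
    (M : ι → Submodule ℝ H) [∀ i, CompleteSpace (M i)]
    (y : H) : Summable fun i => ω i * ‖(M i).starProjection y‖ ^ 2 := by
  refine Summable.of_nonneg_of_le (fun i => ?_) (fun i => ?_) (hωs.summable.mul_right (‖y‖ ^ 2))
  · have := hω i; positivity
  · have := (M i).norm_starProjection_apply_le y
    have := hω i
    gcongr

theorem aux_proj_le (ω : ι → ℝ) (hω : ∀ i, 0 < ω i) (hωs : HasSum ω 1) [CompleteSpace H]
    (M : ι → Submodule ℝ H) [∀ i, CompleteSpace (M i)]
    (y : H) : ∑' i, ω i * ‖(M i).starProjection y‖ ^ 2 ≤ ‖y‖ ^ 2 := by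
  have h := (aux_proj_summable ω hω hωs M y).tsum_le_tsum (g := fun i => ω i * ‖y‖ ^ 2)
    (fun i => by
      have := (M i).norm_starProjection_apply_le y
      have := hω i
      gcongr) (hωs.summable.mul_right (‖y‖ ^ 2))
  rwa [tsum_mul_right, hωs.tsum_eq, one_mul] at h

theorem aux_sum_sq (ω : ι → ℝ) (hω : ∀ i, 0 < ω i) (hωs : HasSum ω 1) [CompleteSpace H]
    (M : ι → Submodule ℝ H) [∀ i, CompleteSpace (M i)]
    (x : ι → H) (hxM : ∀ i, x i ∈ M i) (y : H)
    (hx : Summable fun i => ω i * ‖x i‖ ^ 2) :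
    (∑' i, ω i * ⟪x i, y⟫) ^ 2 ≤
      (∑' i, ω i * ‖x i‖ ^ 2) * ∑' i, ω i * ‖(M i).starProjection y‖ ^ 2 := by
  have h := (aux_cs ω hω x (fun i => (M i).starProjection y) hx
    (aux_proj_summable ω hω hωs M y)).2
  have h2 : ∀ i, ⟪x i, (M i).starProjection y⟫ = ⟪x i, y⟫ := fun i => by
    rw [← Submodule.inner_starProjection_left_eq_right,
      Submodule.starProjection_eq_self_iff.2 (hxM i)]
  simpa only [h2] using h

theorem aux_bdd (ω : ι → ℝ) (hω : ∀ i, 0 < ω i) (hωs : HasSum ω 1) [CompleteSpace H]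
    (M : ι → Submodule ℝ H) [∀ i, CompleteSpace (M i)]
    : BddAbove { r : ℝ | ∃ (x : ι → H) (y : H),
    (∀ i, x i ∈ M i ⊓ (⨅ j, M j)ᗮ) ∧
    (Summable fun i => ω i * ‖x i‖ ^ 2) ∧ (∑' i, ω i * ‖x i‖ ^ 2) ≤ 1 ∧
    y ∈ (⨅ j, M j)ᗮ ∧ ‖y‖ ≤ 1 ∧
    r = ∑' i, ω i * ⟪x i, y⟫ } := by
  refine ⟨1, ?_⟩
  rintro r ⟨x, y, hx, hs, hs1, hy, hy1, rfl⟩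
  have h1 := aux_sum_sq ω hω hωs M x (fun i => (hx i).1) y hs
  have h2 := aux_proj_le ω hω hωs M y
  have h3 : 0 ≤ ∑' i, ω i * ‖(M i).starProjection y‖ ^ 2 :=
    tsum_nonneg fun i => by have := hω i; positivity
  have h4 : ‖y‖ ^ 2 ≤ 1 := pow_le_one₀ (norm_nonneg _) hy1
  have : (∑' i, ω i * ⟪x i, y⟫) ^ 2 ≤ 1 := by nlinarith
  exact (abs_le.1 ((sq_le_one_iff_abs_le_one _).1 this)).2

theorem aux_c_nonneg (ω : ι → ℝ) (hω : ∀ i, 0 < ω i) (hωs : HasSum ω 1) [CompleteSpace H]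
    (M : ι → Submodule ℝ H) [∀ i, CompleteSpace (M i)]
    : 0 ≤ friedrichsCos ω M := by
  refine le_csSup (aux_bdd ω hω hωs M) ⟨fun _ => 0, 0, ?_⟩
  simp [summable_zero]

theorem aux_c_le (ω : ι → ℝ) (hω : ∀ i, 0 < ω i) (hωs : HasSum ω 1) [CompleteSpace H]
    (M : ι → Submodule ℝ H) [∀ i, CompleteSpace (M i)]
    (x : ι → H) (hxM : ∀ i, x i ∈ M i ⊓ (⨅ j, M j)ᗮ)
    (hx : Summable fun i => ω i * ‖x i‖ ^ 2) (y : H) (hy : y ∈ (⨅ j, M j)ᗮ) :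
    ∑' i, ω i * ⟪x i, y⟫ ≤ friedrichsCos ω M * (√(∑' i, ω i * ‖x i‖ ^ 2) * ‖y‖) := by
  have hS0 : 0 ≤ ∑' i, ω i * ‖x i‖ ^ 2 := tsum_nonneg fun i => by have := hω i; positivity
  have h1 := aux_sum_sq ω hω hωs M x (fun i => (hxM i).1) y hx
  set S := ∑' i, ω i * ‖x i‖ ^ 2 with hS
  by_cases hz : S = 0
  · rw [hz, zero_mul] at h1
    have : ∑' i, ω i * ⟪x i, y⟫ = 0 := by nlinarith
    rw [this, hz]; simp
  by_cases hy0 : y = 0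
  · simp [hy0]
  have hSp : 0 < S := lt_of_le_of_ne hS0 (Ne.symm hz)
  have hsp : 0 < √S := Real.sqrt_pos.2 hSp
  have hyp : 0 < ‖y‖ := norm_pos_iff.2 hy0
  have heq : ∀ i, ω i * ‖(√S)⁻¹ • x i‖ ^ 2 = ω i * ‖x i‖ ^ 2 * S⁻¹ := fun i => by
    rw [norm_smul, mul_pow, Real.norm_eq_abs, sq_abs, inv_pow, Real.sq_sqrt hS0]; ring
  have hmem : (√S)⁻¹ * ‖y‖⁻¹ * ∑' i, ω i * ⟪x i, y⟫ ≤ friedrichsCos ω M := by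
    refine le_csSup (aux_bdd ω hω hωs M) ⟨fun i => (√S)⁻¹ • x i, ‖y‖⁻¹ • y, ?_, ?_, ?_, ?_, ?_, ?_⟩
    · exact fun i => Submodule.smul_mem _ _ (hxM i)
    · simp only [heq]; exact hx.mul_right _
    · simp only [heq]; rw [tsum_mul_right, ← hS, mul_inv_cancel₀ hz]
    · exact Submodule.smul_mem _ _ hy
    · rw [norm_smul, norm_inv, norm_norm, inv_mul_cancel₀ hyp.ne']
    · rw [← tsum_mul_left]
      refine tsum_congr fun i => ?_
      rw [real_inner_smul_left, real_inner_smul_right]; ring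
  have : ∑' i, ω i * ⟪x i, y⟫ =
      ((√S)⁻¹ * ‖y‖⁻¹ * ∑' i, ω i * ⟪x i, y⟫) * (√S * ‖y‖) := by
    field_simp
  rw [this]
  gcongr

theorem aux_proj_mem (ω : ι → ℝ) (hω : ∀ i, 0 < ω i) (hωs : HasSum ω 1) [CompleteSpace H]
    (M : ι → Submodule ℝ H) [∀ i, CompleteSpace (M i)]
    (i : ι) (y : H) (hy : y ∈ (⨅ j, M j)ᗮ) :
    (M i).starProjection y ∈ M i ⊓ (⨅ j, M j)ᗮ := by
  refine ⟨Submodule.starProjection_apply_mem _ _, ?_⟩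
  refine (Submodule.mem_orthogonal _ _).2 ?_
  intro u hu
  rw [← Submodule.inner_starProjection_left_eq_right,
    Submodule.starProjection_eq_self_iff.2 ((Submodule.mem_iInf _).1 hu i)]
  exact (Submodule.mem_orthogonal _ _).1 hy u hu

theorem aux_T_summable (ω : ι → ℝ) (hω : ∀ i, 0 < ω i) (hωs : HasSum ω 1) [CompleteSpace H]
    (M : ι → Submodule ℝ H) [∀ i, CompleteSpace (M i)]
    (y : H) : Summable fun i => ω i • (M i).starProjection y :=
  aux_summable ω hω hωs.summable _ (aux_proj_summable ω hω hωs M y)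

theorem aux_T_mem (ω : ι → ℝ) (hω : ∀ i, 0 < ω i) (hωs : HasSum ω 1) [CompleteSpace H]
    (M : ι → Submodule ℝ H) [∀ i, CompleteSpace (M i)]
    (y : H) (hy : y ∈ (⨅ j, M j)ᗮ) :
    ∑' i, ω i • (M i).starProjection y ∈ (⨅ j, M j)ᗮ := by
  rw [Submodule.mem_orthogonal']
  intro u hu
  rw [aux_inner _ _ (aux_T_summable ω hω hωs M y)]
  rw [← tsum_zero (α := ℝ) (β := ι)]
  refine tsum_congr fun i => ?_
  rw [(Submodule.mem_orthogonal' _ _).1 (aux_proj_mem ω hω hωs M i y hy).2 u hu, mul_zero]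

theorem aux_T_norm (ω : ι → ℝ) (hω : ∀ i, 0 < ω i) (hωs : HasSum ω 1) [CompleteSpace H]
    (M : ι → Submodule ℝ H) [∀ i, CompleteSpace (M i)]
    (y : H) (hy : y ∈ (⨅ j, M j)ᗮ) :
    ‖∑' i, ω i • (M i).starProjection y‖ ≤ friedrichsCos ω M ^ 2 * ‖y‖ := by
  have hc := aux_c_nonneg ω hω hωs M
  have hP := aux_proj_summable ω hω hωs M y
  have hS0 : 0 ≤ ∑' i, ω i * ‖(M i).starProjection y‖ ^ 2 :=
    tsum_nonneg fun i => by have := hω i; positivity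
  have h1 := aux_c_le ω hω hωs M _ (fun i => aux_proj_mem ω hω hωs M i y hy) hP y hy
  have h2 := aux_c_le ω hω hωs M _ (fun i => aux_proj_mem ω hω hωs M i y hy) hP _
    (aux_T_mem ω hω hωs M y hy)
  rw [← aux_inner _ _ (aux_T_summable ω hω hωs M y), real_inner_self_eq_norm_sq] at h2
  have h3 : ∑' i, ω i * ⟪(M i).starProjection y, y⟫ =
      ∑' i, ω i * ‖(M i).starProjection y‖ ^ 2 := tsum_congr fun i => by
    rw [← real_inner_self_eq_norm_sq, Submodule.inner_starProjection_left_eq_right,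
      Submodule.inner_starProjection_left_eq_right,
      Submodule.starProjection_eq_self_iff.2 (Submodule.starProjection_apply_mem _ _)]
  rw [h3] at h1
  set S := ∑' i, ω i * ‖(M i).starProjection y‖ ^ 2
  set t := ‖∑' i, ω i • (M i).starProjection y‖
  have ht : 0 ≤ t := norm_nonneg _
  have h4 : √S ≤ friedrichsCos ω M * ‖y‖ := by
    by_cases h : √S = 0
    · rw [h]; positivity
    · have hp : 0 < √S := lt_of_le_of_ne (Real.sqrt_nonneg _) (Ne.symm h)
      have := Real.mul_self_sqrt hS0
      refine le_of_mul_le_mul_left ?_ hp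
      nlinarith
  have h5 : t ≤ friedrichsCos ω M * √S := by
    by_cases h : t = 0
    · rw [h]; positivity
    · have hp : 0 < t := lt_of_le_of_ne ht (Ne.symm h)
      refine le_of_mul_le_mul_left ?_ hp
      nlinarith
  calc t ≤ friedrichsCos ω M * √S := h5
    _ ≤ friedrichsCos ω M * (friedrichsCos ω M * ‖y‖) := by gcongr
    _ = _ := by ring

theorem aux_surj (ω : ι → ℝ) (hω : ∀ i, 0 < ω i) (hωs : HasSum ω 1) [CompleteSpace H]
    (M : ι → Submodule ℝ H) [∀ i, CompleteSpace (M i)]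

    (hclosed : IsClosed { y : H | ∃ x : ι → H, (∀ i, x i ∈ (M i)ᗮ) ∧
      (Summable fun i => ω i * ‖x i‖ ^ 2) ∧ y = ∑' i, ω i • x i }) :
    ∃ C : ℝ, 0 < C ∧ ∀ y ∈ (⨅ j, M j)ᗮ, ∃ x : ι → H, (∀ i, x i ∈ (M i)ᗮ) ∧
      (Summable fun i => ω i * ‖x i‖ ^ 2) ∧ y = ∑' i, ω i • x i ∧
      ∑' i, ω i * ‖x i‖ ^ 2 ≤ C * ‖y‖ ^ 2 := by
  have h2 : (0 : ℝ) < (2 : ENNReal).toReal := by norm_num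
  have hsq : ∀ i, (√(ω i)) ^ 2 = ω i := fun i => Real.sq_sqrt (hω i).le
  have hsp : ∀ i, 0 < √(ω i) := fun i => Real.sqrt_pos.2 (hω i)
  have hn : ∀ i (v : H), ω i * ‖(√(ω i))⁻¹ • v‖ ^ 2 = ‖v‖ ^ 2 := fun i v => by
    rw [norm_smul, mul_pow, Real.norm_eq_abs, sq_abs, inv_pow, hsq, ← mul_assoc,
      mul_inv_cancel₀ (hω i).ne', one_mul]
  have hlp : ∀ u : lp (fun i => ↥(M i)ᗮ) 2,
      HasSum (fun i => ω i * ‖(√(ω i))⁻¹ • (u i : H)‖ ^ 2) (‖u‖ ^ 2) := fun u => by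
    have := lp.hasSum_norm h2 u
    simp only [hn]
    simpa using this
  have hsm : ∀ u : lp (fun i => ↥(M i)ᗮ) 2,
      Summable (fun i => ω i • (√(ω i))⁻¹ • (u i : H)) := fun u =>
    aux_summable ω hω hωs.summable _ (hlp u).summable
  let L0 : lp (fun i => ↥(M i)ᗮ) 2 →ₗ[ℝ] H :=
    { toFun := fun u => ∑' i, ω i • (√(ω i))⁻¹ • (u i : H)
      map_add' := fun u v => by
        rw [← (hsm u).tsum_add (hsm v)]
        exact tsum_congr fun i => by simp
      map_smul' := fun a u => by
        rw [RingHom.id_apply, ← (hsm u).tsum_const_smul]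
        refine tsum_congr fun i => ?_
        simp only [lp.coeFn_smul, Pi.smul_apply, Submodule.coe_smul]
        simp only [smul_smul]
        congr 1; ring }
  let L : lp (fun i => ↥(M i)ᗮ) 2 →L[ℝ] H := L0.mkContinuous 1 fun u => by
    have := aux_norm ω hω hωs _ (hlp u).summable
    rw [(hlp u).tsum_eq] at this
    rw [one_mul]
    exact le_of_sq_le_sq this (norm_nonneg _)
  have hL : ∀ u, L u = ∑' i, ω i • (√(ω i))⁻¹ • (u i : H) := fun u => rfl
  have hrange : (L.range : Set H) = { y : H | ∃ x : ι → H, (∀ i, x i ∈ (M i)ᗮ) ∧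
      (Summable fun i => ω i * ‖x i‖ ^ 2) ∧ y = ∑' i, ω i • x i } := by
    ext y
    constructor
    · rintro ⟨u, rfl⟩
      exact ⟨_, fun i => Submodule.smul_mem _ _ (u i).2, (hlp u).summable, hL u⟩
    · rintro ⟨x, hx, hs, rfl⟩
      let f : ∀ i, ↥(M i)ᗮ := fun i => √(ω i) • ⟨x i, hx i⟩
      have hf : Memℓp f 2 := by
        refine memℓp_gen ?_
        refine hs.congr fun i => ?_
        have : ‖f i‖ = √(ω i) * ‖x i‖ := by
          simp only [f, norm_smul, Real.norm_eq_abs, abs_of_pos (hsp i)]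
          rfl
        rw [this]
        simp [mul_pow, hsq]
      refine ⟨⟨f, hf⟩, ?_⟩
      refine (hL _).trans (tsum_congr fun i => ?_)
      simp [f, smul_smul, (hsp i).ne']
  have hcl : IsClosed (L.range : Set H) := hrange ▸ hclosed
  have : CompleteSpace L.range := hcl.completeSpace_coe
  have hle : (⨅ j, M j)ᗮ ≤ L.range := by
    have h1 : L.rangeᗮ ≤ ⨅ j, M j := by
      intro y hy
      rw [Submodule.mem_iInf]
      intro i
      rw [← Submodule.orthogonal_orthogonal (M i), Submodule.mem_orthogonal]
      intro v hv
      have hmem : ω i • v ∈ (L.range : Set H) := by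
        classical
        rw [hrange]
        refine ⟨Pi.single i v, fun j => ?_, ?_, ?_⟩
        · by_cases h : j = i
          · subst h; simpa using hv
          · simp [h]
        · refine summable_of_ne_finset_zero (s := {i}) fun j hj => ?_
          have : j ≠ i := by simpa using hj
          simp [this]
        · rw [tsum_eq_single i]
          · simp
          · intro j hj; simp [hj]
      have := (Submodule.mem_orthogonal _ _).1 hy _ hmem
      rw [real_inner_smul_left] at this
      exact (mul_eq_zero.1 this).resolve_left (hω i).ne'
    have := Submodule.orthogonal_le h1
    rwa [Submodule.orthogonal_orthogonal] at this
  have hsurj : Function.Surjective L.rangeRestrict := by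
    rintro ⟨y, u, rfl⟩
    exact ⟨u, rfl⟩
  obtain ⟨C, hC, h⟩ := L.rangeRestrict.exists_preimage_norm_le hsurj
  refine ⟨C ^ 2, by positivity, fun y hy => ?_⟩
  obtain ⟨u, hu, hun⟩ := h ⟨y, hle hy⟩
  refine ⟨_, fun i => Submodule.smul_mem _ _ (u i).2, (hlp u).summable, ?_, ?_⟩
  · rw [← hL]; exact (congrArg Subtype.val hu).symm
  · rw [(hlp u).tsum_eq, ← mul_pow]
    exact pow_le_pow_left₀ (norm_nonneg _) hun 2

theorem aux_lt (ω : ι → ℝ) (hω : ∀ i, 0 < ω i) (hωs : HasSum ω 1) [CompleteSpace H]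
    (M : ι → Submodule ℝ H) [∀ i, CompleteSpace (M i)]

    (hclosed : IsClosed { y : H | ∃ x : ι → H, (∀ i, x i ∈ (M i)ᗮ) ∧
      (Summable fun i => ω i * ‖x i‖ ^ 2) ∧ y = ∑' i, ω i • x i }) :
    friedrichsCos ω M < 1 := by
  obtain ⟨C, hC, h⟩ := aux_surj ω hω hωs M hclosed
  have hlt : √(1 - (C + 1)⁻¹) < 1 := by
    rw [Real.sqrt_lt' one_pos]
    have : 0 < (C + 1)⁻¹ := by positivity
    linarith
  refine lt_of_le_of_lt (csSup_le ⟨0, fun _ => 0, 0, by simp [summable_zero]⟩ ?_) hlt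
  rintro r ⟨x, y, hx, hs, hs1, hy, hy1, rfl⟩
  have h1 := aux_sum_sq ω hω hωs M x (fun i => (hx i).1) y hs
  refine Real.le_sqrt_of_sq_le ?_
  have h3 : 0 ≤ ∑' i, ω i * ‖(M i).starProjection y‖ ^ 2 :=
    tsum_nonneg fun i => by have := hω i; positivity
  have h4 : ‖y‖ ^ 2 ≤ 1 := pow_le_one₀ (norm_nonneg _) hy1
  obtain ⟨z, hz, hzs, hzy, hzC⟩ := h y hy
  have h5 := aux_sum_sq ω hω hωs (fun i => (M i)ᗮ) z hz y hzs
  rw [← aux_inner _ _ (aux_summable ω hω hωs.summable z hzs), ← hzy,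
    real_inner_self_eq_norm_sq] at h5
  have h6 : ∑' i, ω i * ‖(M i)ᗮ.starProjection y‖ ^ 2 =
      ‖y‖ ^ 2 - ∑' i, ω i * ‖(M i).starProjection y‖ ^ 2 := by
    rw [eq_sub_iff_add_eq', ← (aux_proj_summable ω hω hωs M y).tsum_add
      (aux_proj_summable ω hω hωs (fun i => (M i)ᗮ) y)]
    simp only [← mul_add, ← Submodule.norm_sq_eq_add_norm_sq_starProjection]
    rw [tsum_mul_right, hωs.tsum_eq, one_mul]
  have h7 : 0 ≤ ∑' i, ω i * ‖(M i)ᗮ.starProjection y‖ ^ 2 :=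
    tsum_nonneg fun i => by have := hω i; positivity
  rw [h6] at h5 h7
  set S := ∑' i, ω i * ‖(M i).starProjection y‖ ^ 2
  have h8 : S ≤ (1 - (C + 1)⁻¹) * ‖y‖ ^ 2 := by
    have h9 : ‖y‖ ^ 2 ≤ (C + 1) * (‖y‖ ^ 2 - S) := by
      by_cases hy0 : ‖y‖ ^ 2 = 0
      · rw [hy0] at h7 ⊢; nlinarith
      · have hp : 0 < ‖y‖ ^ 2 := lt_of_le_of_ne (sq_nonneg _) (Ne.symm hy0)
        have : ‖y‖ ^ 2 * ‖y‖ ^ 2 ≤ ‖y‖ ^ 2 * (C * (‖y‖ ^ 2 - S)) := by nlinarith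
        have := le_of_mul_le_mul_left this hp
        linarith
    have h10 : (C + 1)⁻¹ * ‖y‖ ^ 2 ≤ ‖y‖ ^ 2 - S := by
      rw [inv_mul_le_iff₀ (by positivity)]; exact h9
    linarith
  have h11 : 0 ≤ 1 - (C + 1)⁻¹ := by
    have : (C + 1)⁻¹ ≤ 1 := inv_le_one_of_one_le₀ (by linarith)
    linarith
  have h12 : (1 - (C + 1)⁻¹) * ‖y‖ ^ 2 ≤ 1 - (C + 1)⁻¹ := mul_le_of_le_one_right h11 h4
  have h13 := mul_le_mul_of_nonneg_right hs1 h3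
  linarith

theorem aux_iter_s15 (ω : ι → ℝ) (hω : ∀ i, 0 < ω i) (hωs : HasSum ω 1) [CompleteSpace H]
    (M : ι → Submodule ℝ H) [∀ i, CompleteSpace (M i)]
    [CompleteSpace ↥(⨅ i, M i : Submodule ℝ H)] (x : H) (k : ℕ) :
    (fun z : H => ∑' i, ω i • (M i).starProjection z)^[k] x -
      (⨅ i, M i : Submodule ℝ H).starProjection x ∈ (⨅ i, M i : Submodule ℝ H)ᗮ ∧
    ‖(fun z : H => ∑' i, ω i • (M i).starProjection z)^[k] x -
      (⨅ i, M i : Submodule ℝ H).starProjection x‖ ≤ friedrichsCos ω M ^ (2 * k) * ‖x‖ := by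
  induction k with
  | zero =>
    refine ⟨Submodule.sub_starProjection_mem_orthogonal _, ?_⟩
    have := Submodule.norm_starProjection_apply_le (⨅ i, M i : Submodule ℝ H)ᗮ x
    rw [Submodule.starProjection_orthogonal_val] at this
    simpa using this
  | succ k ih =>
    obtain ⟨ih1, ih2⟩ := ih
    rw [Function.iterate_succ_apply']
    set z := (fun z : H => ∑' i, ω i • (M i).starProjection z)^[k] x
    set p := (⨅ i, M i : Submodule ℝ H).starProjection x with hp
    have hpm : p ∈ (⨅ i, M i : Submodule ℝ H) := Submodule.starProjection_apply_mem _ _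
    have heq : (∑' i, ω i • (M i).starProjection z) - p =
        ∑' i, ω i • (M i).starProjection (z - p) := by
      have h1 : ∑' i, ω i • (M i).starProjection p = p := by
        have : ∀ i, (M i).starProjection p = p := fun i =>
          Submodule.starProjection_eq_self_iff.2 ((Submodule.mem_iInf _).1 hpm i)
        simp only [this]
        rw [hωs.summable.tsum_smul_const, hωs.tsum_eq, one_smul]
      conv_lhs => rw [← h1]
      rw [← (aux_T_summable ω hω hωs M z).tsum_sub (aux_T_summable ω hω hωs M p)]
      exact tsum_congr fun i => by rw [map_sub, smul_sub]
    simp only [heq]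
    refine ⟨aux_T_mem ω hω hωs M _ ih1, (aux_T_norm ω hω hωs M _ ih1).trans ?_⟩
    calc _ ≤ friedrichsCos ω M ^ 2 * (friedrichsCos ω M ^ (2 * k) * ‖x‖) := by gcongr
      _ = _ := by ring

end Helpers

/-- If `A_ω` is closed in `H`, then `c_ω < 1` and the simultaneous
projection method converges linearly: `‖T_ω^k x − P_M x‖ ≤ c_ω^{2k} ‖x‖`. -/
theorem stmt_15 {H : Type*} [NormedAddCommGroup H] [InnerProductSpace ℝ H] [CompleteSpace H]
    {ι : Type*} [Countable ι] [Nonempty ι]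
    (ω : ι → ℝ) (hω : ∀ i, 0 < ω i) (hωsum : HasSum ω 1)
    (M : ι → Submodule ℝ H) [∀ i, CompleteSpace (M i)]
    [CompleteSpace ↥(⨅ i, M i : Submodule ℝ H)]
    (hMnt : ∀ i, M i ≠ ⊥)
    (hclosed : IsClosed { y : H | ∃ x : ι → H, (∀ i, x i ∈ (M i)ᗮ) ∧
      (Summable fun i => ω i * ‖x i‖ ^ 2) ∧ y = ∑' i, ω i • x i }) :
    friedrichsCos ω M < 1 ∧
    ∀ (x : H) (k : ℕ), 1 ≤ k →
      ‖(fun z : H => ∑' i, ω i • ((Submodule.orthogonalProjectionOnto (M i) z : H)))^[k] x -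
          (Submodule.orthogonalProjectionOnto (⨅ i, M i : Submodule ℝ H) x : H)‖ ≤
        friedrichsCos ω M ^ (2 * k) * ‖x‖ := by
  exact ⟨aux_lt ω hω hωsum M hclosed, fun x k _ => (aux_iter_s15 ω hω hωsum M x k).2⟩
end

section
/- Assume the set A_ω = { ∑ᵢ ω i • xᵢ : xᵢ ∈ Mᵢ^⊥ for all i, ∑ᵢ ω i ‖xᵢ‖² < ∞ } is not closed in H. Then the simultaneous projection method converges arbitrarily slowly: for every sequence (a_k)_{k≥1} of real numbers with a_k ≥ 0 for all k and a_k → 0 as k → ∞, there exists x ∈ H such that ‖T_ω^k x − P_M x‖ ≥ a_k for every integer k ≥ 1. -/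
open RealInnerProductSpace

section Aux

variable {H : Type*} [NormedAddCommGroup H] [InnerProductSpace ℝ H]

lemma aux_pow_symm (T : H →L[ℝ] H) (hs : ∀ x y, ⟪T x, y⟫ = ⟪x, T y⟫) (k : ℕ) (x y : H) :
    ⟪(T^[k]) x, y⟫ = ⟪x, (T^[k]) y⟫ := by
  induction k generalizing x y with
  | zero => rfl
  | succ k ih => rw [Function.iterate_succ_apply, ih, hs, ← Function.iterate_succ_apply' (f := T)]

lemma aux_pow_near (T : H →L[ℝ] H) (hT : ∀ x, ‖T x‖ ≤ ‖x‖) (k : ℕ) (e : H) :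
    ‖(T^[k]) e - e‖ ≤ k * ‖T e - e‖ := by
  induction k with
  | zero => simp
  | succ k ih =>
    rw [Function.iterate_succ_apply']
    have h1 : T ((T^[k]) e) - e = T ((T^[k]) e - e) + (T e - e) := by rw [map_sub]; abel
    rw [h1]
    refine (norm_add_le _ _).trans ?_
    have := hT ((T^[k]) e - e)
    push_cast
    linarith

lemma aux_iter_add (T : H →L[ℝ] H) (k : ℕ) (x e : H) (c : ℝ) :
    (T^[k]) (x + c • e) = (T^[k]) x + c • (T^[k]) e := by
  induction k with
  | zero => rfl
  | succ k ih => simp only [Function.iterate_succ_apply', ih, map_add, map_smul]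

lemma aux_step (T : H →L[ℝ] H) (hs : ∀ x y, ⟪T x, y⟫ = ⟪x, T y⟫) (hT : ∀ x, ‖T x‖ ≤ ‖x‖)
    (N : Submodule ℝ H) (h : ∀ δ > 0, ∃ e ∈ N, ‖e‖ = 1 ∧ ‖T e - e‖ ≤ δ)
    (x : H) (hx : x ∈ N) (n : ℕ) (c : ℝ) (hc : 0 < c) :
    ∃ x' ∈ N, ‖x' - x‖ ≤ c ∧ ∀ k ≤ n, ‖(T^[k]) x‖ ^ 2 + c ^ 2 / 4 ≤ ‖(T^[k]) x'‖ ^ 2 := by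
  set D : ℝ := (2 * c * ‖x‖ + c ^ 2) * (2 * n + 1) with hD
  have hDpos : 0 < D := by positivity
  have hB : 0 < c ^ 2 * (3 / 4) / D := by positivity
  obtain ⟨e, heN, he1, hed, hsg⟩ : ∃ e ∈ N, ‖e‖ = 1 ∧ ‖T e - e‖ ≤ c ^ 2 * (3 / 4) / D ∧
      0 ≤ ⟪x, e⟫ := by
    obtain ⟨e, heN, he1, hed⟩ := h _ hB
    rcases le_total 0 ⟪x, e⟫ with h0 | h0
    · exact ⟨e, heN, he1, hed, h0⟩
    · refine ⟨-e, N.neg_mem heN, by simpa using he1, ?_, by simpa using h0⟩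
      rw [map_neg, ← norm_neg]
      have h2 : -(-T e - -e) = T e - e := by abel
      rw [h2]
      exact hed
  refine ⟨x + c • e, N.add_mem hx (N.smul_mem c heN), ?_, ?_⟩
  · simp [norm_smul, he1, abs_of_pos hc]
  intro k hk
  rw [aux_iter_add, norm_add_sq_real, inner_smul_right, norm_smul, mul_pow,
    ← real_inner_self_eq_norm_sq ((T^[k]) e), aux_pow_symm T hs, aux_pow_symm T hs,
    ← Function.iterate_add_apply]
  have hnear := aux_pow_near T hT (k + k) e
  set w := (T^[k + k]) e - e with hw
  have hTe : (T^[k + k]) e = e + w := by rw [hw]; abel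
  rw [hTe, inner_add_right, inner_add_right, real_inner_self_eq_norm_sq, he1]
  have hxw := abs_le.1 (abs_real_inner_le_norm x w)
  have hew := abs_le.1 (abs_real_inner_le_norm e w)
  rw [he1] at hew
  have hkn : (k : ℝ) ≤ n := by exact_mod_cast hk
  have hwD : (2 * c * ‖x‖ + c ^ 2) * ‖w‖ ≤ c ^ 2 * (3 / 4) := by
    have h1 : ‖w‖ ≤ (2 * n + 1) * (c ^ 2 * (3 / 4) / D) := by
      refine hnear.trans ?_
      have h3 : ((k + k : ℕ) : ℝ) ≤ 2 * n + 1 := by push_cast; linarith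
      exact mul_le_mul h3 hed (norm_nonneg _) (by positivity)
    calc (2 * c * ‖x‖ + c ^ 2) * ‖w‖
        ≤ (2 * c * ‖x‖ + c ^ 2) * ((2 * n + 1) * (c ^ 2 * (3 / 4) / D)) := by gcongr
      _ = D * (c ^ 2 * (3 / 4) / D) := by rw [hD]; ring
      _ = _ := by field_simp
  have e1 : c * -(‖x‖ * ‖w‖) ≤ c * ⟪x, w⟫ := by gcongr; exact hxw.1
  have e2 : c ^ 2 * -(1 * ‖w‖) ≤ c ^ 2 * ⟪e, w⟫ := by gcongr; exact hew.1
  have e3 : 0 ≤ c * ⟪x, e⟫ := by positivity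
  rw [Real.norm_eq_abs, sq_abs]
  linarith

lemma aux_main [CompleteSpace H]
    (T : H →L[ℝ] H) (hs : ∀ x y, ⟪T x, y⟫ = ⟪x, T y⟫) (hT : ∀ x, ‖T x‖ ≤ ‖x‖)
    (N : Submodule ℝ H) (hN : IsClosed (N : Set H))
    (h : ∀ δ > 0, ∃ e ∈ N, ‖e‖ = 1 ∧ ‖T e - e‖ ≤ δ)
    (a : ℕ → ℝ) (ha : Filter.Tendsto a Filter.atTop (nhds 0)) :
    ∃ x ∈ N, ∀ k, a k ≤ ‖(T^[k]) x‖ := by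
  obtain ⟨B, hB⟩ := ha.bddAbove_range
  have hB' : ∀ k, a k ≤ B := fun k => hB ⟨k, rfl⟩
  set C : ℝ := 2 * |B| + 1 with hC
  have hCpos : 0 < C := by positivity
  set c : ℕ → ℝ := fun j => C * (1 / 2) ^ j with hc
  have hcpos : ∀ j, 0 < c j := fun j => by positivity
  have hn : ∀ j, ∃ n, ∀ k ≥ n, a k ≤ c (j + 1) / 2 := fun j =>
    Filter.eventually_atTop.1 (ha.eventually_le_const (by have := hcpos (j + 1); positivity))
  choose n₀ hn₀ using hn
  obtain ⟨n, hmono, hn⟩ : ∃ n : ℕ → ℕ, Monotone n ∧ ∀ j, ∀ k ≥ n j, a k ≤ c (j + 1) / 2 := by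
    refine ⟨fun j => ∑ i ∈ Finset.range (j + 1), n₀ i, ?_, fun j k hk => hn₀ j k ?_⟩
    · exact monotone_nat_of_le_succ fun j => by
        simp only [Finset.sum_range_succ _ (j + 1)]; omega
    · simp only [Finset.sum_range_succ _ j] at hk; omega
  have hstep : ∀ (j : ℕ) (x : N), ∃ x' ∈ N, ‖x' - (x : H)‖ ≤ c j ∧
      ∀ k ≤ n j, ‖(T^[k]) (x : H)‖ ^ 2 + c j ^ 2 / 4 ≤ ‖(T^[k]) x'‖ ^ 2 :=
    fun j x => aux_step T hs hT N h x x.2 (n j) (c j) (hcpos j)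
  choose F hFN hFd hFk using hstep
  let X : ℕ → N := fun j => Nat.rec 0 (fun j x => ⟨F j x, hFN j x⟩) j
  have hX : ∀ j, (X (j + 1) : H) = F j (X j) := fun j => rfl
  have hcau : CauchySeq (fun j : ℕ => (X j).1) := by
    refine cauchySeq_of_le_geometric (1 / 2) C (by norm_num) fun j => ?_
    rw [dist_comm, dist_eq_norm, hX]
    exact hFd j (X j)
  obtain ⟨x, hx⟩ := cauchySeq_tendsto_of_complete hcau
  refine ⟨x, hN.mem_of_tendsto hx (Filter.Eventually.of_forall fun j => (X j).2), fun k => ?_⟩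
  rcases le_or_gt (a k) 0 with h0 | h0
  · exact h0.trans (norm_nonneg _)
  have hex : ∃ j, k < n j := by
    by_contra hcon
    push Not at hcon
    have ht : Filter.Tendsto (fun j => c (j + 1) / 2) Filter.atTop (nhds 0) := by
      have := (tendsto_pow_atTop_nhds_zero_of_lt_one (r := (1 / 2 : ℝ)) (by norm_num)
        (by norm_num)).const_mul C
      have := ((Filter.tendsto_add_atTop_iff_nat 1).2 this).div_const 2
      simpa [hc] using this
    exact absurd (ge_of_tendsto' ht fun j => hn j k (hcon j)) (not_le.2 h0)
  classical
  have hmax : ∃ j, k < n j ∧ a k ≤ c j / 2 := by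
    refine ⟨Nat.find hex, Nat.find_spec hex, ?_⟩
    rcases hj : Nat.find hex with _ | j
    · have := hB' k
      have := le_abs_self B
      simp only [hc, hC, pow_zero]
      linarith
    · exact hn j k (not_lt.1 (Nat.find_min hex (m := j) (by omega)))
  obtain ⟨j, hkj, haj⟩ := hmax
  have hlow : ∀ i, (c j / 2) ^ 2 ≤ ‖(T^[k]) (X (j + 1 + i)).1‖ ^ 2 := by
    intro i
    induction i with
    | zero =>
      have := hFk j (X j) k hkj.le
      rw [add_zero, hX]
      have := sq_nonneg ‖(T^[k]) (X j).1‖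
      linarith
    | succ i ih =>
      have := hFk (j + 1 + i) (X (j + 1 + i)) k (hkj.le.trans (hmono (by omega)))
      rw [← add_assoc, hX]
      have := sq_nonneg (c (j + 1 + i))
      linarith
  have hlim : Filter.Tendsto (fun i => ‖(T^[k]) (X i).1‖) Filter.atTop
      (nhds ‖(T^[k]) x‖) :=
    (((T.continuous.iterate k).tendsto x).comp hx).norm
  refine haj.trans (ge_of_tendsto hlim ?_)
  filter_upwards [Filter.eventually_ge_atTop (j + 1)] with i hi
  obtain ⟨i, rfl⟩ := Nat.exists_eq_add_of_le hi
  exact (sq_le_sq₀ (by have := hcpos j; positivity) (norm_nonneg _)).1 (hlow i)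

lemma aux_surj_s17 [CompleteSpace H]
    (S : H →L[ℝ] H) (hs : ∀ x y, ⟪S x, y⟫ = ⟪x, S y⟫)
    (N : Submodule ℝ H) (hN : IsClosed (N : Set H)) (hSN : ∀ x ∈ N, S x ∈ N)
    (δ : ℝ) (hδ : 0 < δ) (hb : ∀ x ∈ N, δ * ‖x‖ ≤ ‖S x‖) (y : H) (hy : y ∈ N) :
    ∃ x ∈ N, S x = y := by
  have : CompleteSpace N := hN.completeSpace_coe
  let L : N →L[ℝ] H := S.comp N.subtypeL
  have hcl : IsClosed (Set.range L) := by
    have hanti : AntilipschitzWith (Real.toNNReal δ⁻¹) L := by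
      refine AddMonoidHomClass.antilipschitz_of_bound L fun x => ?_
      rw [Real.coe_toNNReal _ (by positivity)]
      have := hb x x.2
      rw [inv_mul_eq_div, le_div_iff₀ hδ, mul_comm]
      exact this
    exact hanti.isClosed_range L.uniformContinuous
  let K : Submodule ℝ H := L.toLinearMap.range
  have hK : IsClosed (K : Set H) := by
    have hKr : (K : Set H) = Set.range L := rfl
    rw [hKr]
    exact hcl
  have : CompleteSpace K := hK.completeSpace_coe
  have hKN : K ≤ N := by
    rintro _ ⟨x, rfl⟩
    exact hSN x x.2
  have hmemK : ∀ x ∈ N, S x ∈ K := fun x hx => ⟨⟨x, hx⟩, rfl⟩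
  have hPK : K.starProjection y ∈ K := K.starProjection_apply_mem y
  set z := y - K.starProjection y with hz
  have hzN : z ∈ N := N.sub_mem hy (hKN hPK)
  have hzK : z ∈ Kᗮ := K.sub_starProjection_mem_orthogonal y
  have hSz : S z = 0 := by
    rw [← inner_self_eq_zero (𝕜 := ℝ), hs]
    exact Submodule.inner_left_of_mem_orthogonal (hmemK _ (hSN z hzN)) hzK
  have hz0 : z = 0 := by
    have := hb z hzN
    rw [hSz, norm_zero] at this
    rw [← norm_le_zero_iff]
    by_contra hcon
    push Not at hcon
    have := mul_pos hδ hcon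
    linarith
  obtain ⟨x, hx⟩ := hPK
  exact ⟨x, x.2, by rw [sub_eq_zero.1 hz0]; exact hx⟩

end Aux

/-- If `A_ω` is not closed in `H`, then the simultaneous projection
method converges arbitrarily slowly: for every nonnegative null sequence `(a_k)` there
is `x ∈ H` with `‖T_ω^k x − P_M x‖ ≥ a_k` for all `k ≥ 1`. -/
theorem stmt_17 {H : Type*} [NormedAddCommGroup H] [InnerProductSpace ℝ H] [CompleteSpace H]
    {ι : Type*} [Countable ι] [Nonempty ι]
    (ω : ι → ℝ) (hω : ∀ i, 0 < ω i) (hωsum : HasSum ω 1)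
    (M : ι → Submodule ℝ H) [∀ i, CompleteSpace (M i)]
    [CompleteSpace ↥(⨅ i, M i : Submodule ℝ H)]
    (hMnt : ∀ i, M i ≠ ⊥)
    (hnc : ¬ IsClosed { y : H | ∃ x : ι → H, (∀ i, x i ∈ (M i)ᗮ) ∧
      (Summable fun i => ω i * ‖x i‖ ^ 2) ∧ y = ∑' i, ω i • x i }) :
    ∀ a : ℕ → ℝ, (∀ k, 0 ≤ a k) → Filter.Tendsto a Filter.atTop (nhds 0) →
      ∃ x : H, ∀ k : ℕ, 1 ≤ k →
        a k ≤ ‖(fun z : H => ∑' i, ω i • ((Submodule.orthogonalProjectionOnto (M i) z : H)))^[k] x -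
          (Submodule.orthogonalProjectionOnto (⨅ i, M i : Submodule ℝ H) x : H)‖ := by
  intro a _ ha
  have hns : ∀ z : H, ∀ i, ‖ω i • ((M i).starProjection z)‖ ≤ ω i * ‖z‖ := fun z i => by
    rw [norm_smul, Real.norm_of_nonneg (hω i).le]
    exact mul_le_mul_of_nonneg_left ((M i).norm_starProjection_apply_le z) (hω i).le
  have hsumz : ∀ z : H, Summable fun i => ω i • ((M i).starProjection z) := fun z =>
    Summable.of_norm_bounded (hωsum.summable.mul_right _) (hns z)
  have hle : ∀ z : H, ‖∑' i, ω i • ((M i).starProjection z)‖ ≤ ‖z‖ := fun z => by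
    have := tsum_of_norm_bounded (hωsum.mul_right ‖z‖) (hns z)
    simpa using this
  let T₀ : H →ₗ[ℝ] H :=
    { toFun := fun z => ∑' i, ω i • ((M i).starProjection z)
      map_add' := fun x y => by
        rw [← (hsumz x).tsum_add (hsumz y)]
        simp only [map_add, smul_add]
      map_smul' := fun r x => by
        rw [RingHom.id_apply, ← (hsumz x).tsum_const_smul]
        simp only [map_smul, smul_comm r] }
  let T : H →L[ℝ] H := T₀.mkContinuous 1 fun z => by rw [one_mul]; exact hle z
  have hTapp : ∀ z, T z = ∑' i, ω i • ((M i).starProjection z) := fun z => rfl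
  have hTn : ∀ z, ‖T z‖ ≤ ‖z‖ := hle
  have hs : ∀ x y, ⟪T x, y⟫ = ⟪x, T y⟫ := fun x y => by
    rw [hTapp, hTapp]
    have h1 := (innerSL ℝ x).map_tsum (hsumz y)
    have h2 := (innerSL ℝ y).map_tsum (hsumz x)
    simp only [innerSL_apply_apply] at h1 h2
    rw [real_inner_comm, h1, h2]
    refine tsum_congr fun i => ?_
    rw [inner_smul_right, inner_smul_right, real_inner_comm,
      Submodule.inner_starProjection_left_eq_right]
  have hTM : ∀ m ∈ (⨅ i, M i : Submodule ℝ H), T m = m := fun m hm => by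
    rw [hTapp]
    have h1 : ∀ i, (M i).starProjection m = m := fun i =>
      Submodule.starProjection_eq_self_iff.2 (Submodule.mem_iInf _ |>.1 hm i)
    simp only [h1]
    rw [hωsum.summable.tsum_smul_const, hωsum.tsum_eq, one_smul]
  set N : Submodule ℝ H := (⨅ i, M i : Submodule ℝ H)ᗮ with hNdef
  have hN : IsClosed (N : Set H) := Submodule.isClosed_orthogonal _
  have hTN : ∀ x ∈ N, T x ∈ N := fun x hx => by
    rw [hNdef, Submodule.mem_orthogonal] at hx ⊢
    intro m hm
    rw [← hs, hTM m hm]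
    exact hx m hm
  have key : ∀ δ > 0, ∃ e ∈ N, ‖e‖ = 1 ∧ ‖T e - e‖ ≤ δ := by
    by_contra hcon
    push Not at hcon
    obtain ⟨δ, hδ, hcon⟩ := hcon
    apply hnc
    convert hN using 1
    ext y
    constructor
    · rintro ⟨x, hx, -, rfl⟩
      have hxN : ∀ i, ω i • x i ∈ N := fun i =>
        N.smul_mem _ (Submodule.orthogonal_le (iInf_le M i) (hx i))
      by_cases hsm : Summable fun i => ω i • x i
      · exact hN.mem_of_tendsto hsm.hasSum
          (Filter.Eventually.of_forall fun s => N.sum_mem fun i _ => hxN i)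
      · rw [tsum_eq_zero_of_not_summable hsm]
        exact N.zero_mem
    · intro hy
      obtain ⟨x, hxN, hxy⟩ := aux_surj_s17 (ContinuousLinearMap.id ℝ H - T)
        (fun x y => by simp [inner_sub_left, inner_sub_right, hs]) N hN
        (fun x hx => N.sub_mem hx (hTN x hx)) δ hδ (fun x hx => by
          rcases eq_or_ne x 0 with rfl | h0
          · simp
          have hpos : 0 < ‖x‖ := norm_pos_iff.2 h0
          have := hcon (‖x‖⁻¹ • x) (N.smul_mem _ hx) (by
            rw [norm_smul, norm_inv, norm_norm, inv_mul_cancel₀ hpos.ne'])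
          rw [map_smul, ← smul_sub, norm_smul, norm_inv, norm_norm, inv_mul_eq_div,
            lt_div_iff₀ hpos] at this
          rw [sub_apply, ContinuousLinearMap.id_apply, norm_sub_rev]
          exact this.le) y hy
      refine ⟨fun i => x - (M i).starProjection x,
        fun i => (M i).sub_starProjection_mem_orthogonal x, ?_, ?_⟩
      · refine Summable.of_nonneg_of_le (fun i => mul_nonneg (hω i).le (sq_nonneg _))
          (fun i => ?_) (hωsum.summable.mul_right ((‖x‖ + ‖x‖) ^ 2))
        refine mul_le_mul_of_nonneg_left ?_ (hω i).le
        refine pow_le_pow_left₀ (norm_nonneg _) ?_ 2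
        exact (norm_sub_le _ _).trans
          (add_le_add le_rfl ((M i).norm_starProjection_apply_le x))
      · rw [← hxy, sub_apply, ContinuousLinearMap.id_apply, hTapp]
        simp only [smul_sub]
        rw [(hωsum.summable.smul_const x).tsum_sub (hsumz x),
          hωsum.summable.tsum_smul_const, hωsum.tsum_eq, one_smul]
  obtain ⟨x, hxN, hx⟩ := aux_main T hs hTn N hN key a ha
  refine ⟨x, fun k _ => ?_⟩
  have hP : Submodule.orthogonalProjectionOnto (⨅ i, M i : Submodule ℝ H) x = 0 :=
    Submodule.orthogonalProjectionOnto_eq_zero_iff.2 hxN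
  rw [hP, Submodule.coe_zero, sub_zero]
  exact hx k
end

section
/- Assume the set A_ω = { ∑ᵢ ω i • xᵢ : xᵢ ∈ Mᵢ^⊥ for all i, ∑ᵢ ω i ‖xᵢ‖² < ∞ } is not closed in H. Then there exists a dense linear subspace Y ⊆ H such that the simultaneous projection method converges super-polynomially fast on Y: for every y ∈ Y and every integer n ≥ 1, k^n · ‖T_ω^k y − P_M y‖ → 0 as k → ∞. -/
open RealInnerProductSpace

section aux
variable {H : Type*} [NormedAddCommGroup H] [InnerProductSpace ℝ H]

/-- Symmetric and firmly nonexpansive. -/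
structure Firm (T : H →L[ℝ] H) : Prop where
  symm : ∀ x y, ⟪T x, y⟫ = ⟪x, T y⟫
  firm : ∀ x, ‖T x‖ ^ 2 ≤ ⟪T x, x⟫

namespace Firm
variable {T : H →L[ℝ] H}

lemma compl (h : Firm T) : Firm (1 - T) where
  symm x y := by simp [inner_sub_left, inner_sub_right, h.symm]
  firm x := by
    have := h.firm x
    simp only [sub_apply, one_apply_eq_self]
    rw [norm_sub_sq_real, inner_sub_left, real_inner_self_eq_norm_sq, real_inner_comm]
    linarith

lemma pow_symm (h : Firm T) (n : ℕ) : ∀ x y, ⟪(T ^ n) x, y⟫ = ⟪x, (T ^ n) y⟫ := by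
  induction n with
  | zero => simp
  | succ n ih =>
    intro x y
    rw [pow_succ, mul_apply_eq_comp, ih, h.symm, ← mul_apply_eq_comp,
      ← pow_succ', ← pow_succ]

lemma moment_nonneg (h : Firm T) (n : ℕ) (x : H) : 0 ≤ ⟪(T ^ n) x, x⟫ := by
  rcases Nat.even_or_odd' n with ⟨k, rfl | rfl⟩
  · rw [two_mul, pow_add, mul_apply_eq_comp, h.pow_symm]
    exact real_inner_self_nonneg
  · rw [show 2 * k + 1 = k + (1 + k) by ring, pow_add, pow_add, mul_apply_eq_comp,
      h.pow_symm, pow_one, mul_apply_eq_comp]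
    exact (sq_nonneg _).trans (h.firm _)

lemma moment_anti (h : Firm T) (n : ℕ) (x : H) :
    ⟪(T ^ (n + 1)) x, x⟫ ≤ ⟪(T ^ n) x, x⟫ := by
  rcases Nat.even_or_odd' n with ⟨k, rfl | rfl⟩
  · have := h.compl.firm ((T ^ k) x)
    have h2 := (sq_nonneg _).trans this
    simp only [sub_apply, one_apply_eq_self, inner_sub_left] at h2
    rw [show 2 * k + 1 = k + (1 + k) by ring, two_mul, pow_add, pow_add, pow_add, pow_one]
    simp only [mul_apply_eq_comp]
    rw [h.pow_symm, h.pow_symm]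
    linarith
  · have := h.firm ((T ^ k) x)
    have e1 : ⟪(T ^ (2 * k + 1 + 1)) x, x⟫ = ‖T ((T ^ k) x)‖ ^ 2 := by
      rw [show 2 * k + 1 + 1 = (k + 1) + (k + 1) by ring, pow_add T (k + 1), mul_apply_eq_comp,
        h.pow_symm, real_inner_self_eq_norm_sq, pow_succ' T k, mul_apply_eq_comp]
    have e2 : ⟪(T ^ (2 * k + 1)) x, x⟫ = ⟪T ((T ^ k) x), (T ^ k) x⟫ := by
      rw [show 2 * k + 1 = k + (k + 1) by ring, pow_add T k, mul_apply_eq_comp,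
        h.pow_symm, pow_succ' T k, mul_apply_eq_comp]
    rw [e1, e2]
    exact this

lemma moment_antitone (h : Firm T) (x : H) : Antitone fun n => ⟪(T ^ n) x, x⟫ :=
  antitone_nat_of_succ_le fun n => h.moment_anti n x

lemma norm_pow_sq (h : Firm T) (n : ℕ) (x : H) : ‖(T ^ n) x‖ ^ 2 = ⟪(T ^ (2 * n)) x, x⟫ := by
  rw [two_mul, pow_add, mul_apply_eq_comp, h.pow_symm, real_inner_self_eq_norm_sq]

lemma norm_pow_le (h : Firm T) (n : ℕ) (x : H) : ‖(T ^ n) x‖ ≤ ‖x‖ := by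
  have := h.moment_antitone x (Nat.zero_le (2 * n))
  simp only [← h.norm_pow_sq, pow_zero, one_apply_eq_self,
    real_inner_self_eq_norm_sq] at this
  exact le_of_sq_le_sq this (norm_nonneg _)

lemma norm_compl_pow_le (h : Firm T) (n : ℕ) (x : H) : ‖(1 - T ^ n) x‖ ≤ ‖x‖ := by
  have h1 := h.moment_antitone x (show n ≤ 2 * n by omega)
  have h2 := h.moment_nonneg n x
  simp only [← h.norm_pow_sq] at h1
  refine le_of_sq_le_sq ?_ (norm_nonneg _)
  simp only [sub_apply, one_apply_eq_self]
  rw [norm_sub_sq_real, real_inner_comm]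
  linarith

lemma decay (h : Firm T) (k : ℕ) (x : H) :
    ((k : ℝ) + 1) * ‖(T ^ k) ((1 - T) x)‖ ^ 2 ≤ ‖x‖ ^ 2 := by
  set b : ℕ → ℝ := fun j => ⟪(T ^ j) x, x⟫ - ⟪(T ^ (j + 1)) x, x⟫ with hb
  have key : ∀ j, ⟪(T ^ j) ((1 - T) x), (1 - T) x⟫ = b j - b (j + 1) := by
    intro j
    rw [← h.compl.symm]
    simp only [hb, sub_apply, one_apply_eq_self, inner_sub_left,
      map_sub]
    simp only [← mul_apply_eq_comp, ← pow_succ, ← pow_succ']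
    
  have bn : ∀ j, 0 ≤ b j := fun j => sub_nonneg.2 (h.moment_anti j x)
  have ba : Antitone b := antitone_nat_of_succ_le fun j => by
    have := h.moment_nonneg j ((1 - T) x)
    rw [key] at this
    linarith
  have hs : ∑ j ∈ Finset.range (k + 1), b j ≤ ‖x‖ ^ 2 := by
    rw [hb, Finset.sum_range_sub']
    have := h.moment_nonneg (k + 1) x
    simp only [pow_zero, one_apply_eq_self, real_inner_self_eq_norm_sq]
    linarith
  have hs2 : ((k : ℝ) + 1) * b k ≤ ∑ j ∈ Finset.range (k + 1), b j := by
    have := Finset.card_nsmul_le_sum (Finset.range (k + 1)) b (b k) (fun j hj =>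
      ba (by simpa [Nat.lt_succ_iff] using hj))
    simpa using this
  have hk : ‖(T ^ k) ((1 - T) x)‖ ^ 2 ≤ b k := by
    rw [h.norm_pow_sq, key]
    have := bn (2 * k + 1)
    have := ba (show k ≤ 2 * k by omega)
    linarith
  have : ((k : ℝ) + 1) * ‖(T ^ k) ((1 - T) x)‖ ^ 2 ≤ ((k : ℝ) + 1) * b k := by gcongr
  linarith

lemma decay_pow (h : Firm T) (k m : ℕ) (x : H) :
    ((k : ℝ) + 1) ^ m * ‖(T ^ (k * m)) (((1 - T) ^ m) x)‖ ^ 2 ≤ ‖x‖ ^ 2 := by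
  have hc : Commute (T ^ k) (1 - T) := ((Commute.one_right T).sub_right (Commute.refl T)).pow_left k
  have : ∀ m x, ((k : ℝ) + 1) ^ m * ‖((T ^ k * (1 - T)) ^ m) x‖ ^ 2 ≤ ‖x‖ ^ 2 := by
    intro m
    induction m with
    | zero => simp
    | succ m ih =>
      intro x
      have h1 := h.decay k (((T ^ k * (1 - T)) ^ m) x)
      rw [pow_succ' (T ^ k * (1 - T)), mul_apply_eq_comp, mul_apply_eq_comp]
      calc _ = ((k : ℝ) + 1) ^ m * (((k : ℝ) + 1) *
            ‖(T ^ k) ((1 - T) (((T ^ k * (1 - T)) ^ m) x))‖ ^ 2) := by ring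
        _ ≤ ((k : ℝ) + 1) ^ m * ‖((T ^ k * (1 - T)) ^ m) x‖ ^ 2 := by gcongr
        _ ≤ _ := ih x
  have := this m x
  rwa [hc.mul_pow, ← pow_mul, mul_apply_eq_comp] at this

lemma superpoly (h : Firm T) (y : H) (hy : ∀ m : ℕ, ∃ z, y = ((1 - T) ^ m) z) (n : ℕ) :
    Filter.Tendsto (fun k : ℕ => (k : ℝ) ^ n * ‖(T ^ k) y‖) Filter.atTop (nhds 0) := by
  set m := 2 * (n + 1) with hm
  obtain ⟨z, hz⟩ := hy m
  set C : ℝ := (m : ℝ) ^ (n + 1) * ‖z‖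
  have hb : ∀ k : ℕ, (k : ℝ) ^ (n + 1) * ‖(T ^ k) y‖ ≤ C := by
    intro k
    set j := k / m with hj
    have h1 : (k : ℝ) ≤ m * ((j : ℝ) + 1) := by
      have := (Nat.lt_mul_div_succ k (show 0 < m by omega)).le
      exact_mod_cast this
    have h2 : ‖(T ^ k) y‖ ≤ ‖(T ^ (j * m)) y‖ := by
      have : k = (k - j * m) + j * m := by
        have h0 : j * m ≤ k := Nat.div_mul_le_self k m
        omega
      rw [this, pow_add, mul_apply_eq_comp]
      exact h.norm_pow_le _ _
    have h3 : ((j : ℝ) + 1) ^ (n + 1) * ‖(T ^ (j * m)) y‖ ≤ ‖z‖ := by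
      have := h.decay_pow j m z
      rw [← hz] at this
      refine le_of_sq_le_sq ?_ (norm_nonneg _)
      rw [mul_pow, ← pow_mul, mul_comm (n + 1) 2]
      exact this
    calc (k : ℝ) ^ (n + 1) * ‖(T ^ k) y‖
        ≤ (m * ((j : ℝ) + 1)) ^ (n + 1) * ‖(T ^ (j * m)) y‖ := by gcongr
      _ = (m : ℝ) ^ (n + 1) * (((j : ℝ) + 1) ^ (n + 1) * ‖(T ^ (j * m)) y‖) := by
          rw [mul_pow, mul_assoc]
      _ ≤ C := mul_le_mul_of_nonneg_left h3 (by positivity)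
  refine tendsto_of_tendsto_of_tendsto_of_le_of_le' tendsto_const_nhds
    (tendsto_const_div_atTop_nhds_zero_nat C) (Filter.Eventually.of_forall fun k => by positivity) ?_
  filter_upwards [Filter.eventually_gt_atTop 0] with k hk
  have hk' : (0 : ℝ) < k := by exact_mod_cast hk
  rw [le_div_iff₀ hk']
  calc _ = (k : ℝ) ^ (n + 1) * ‖(T ^ k) y‖ := by ring
    _ ≤ C := hb k

end Firm

/-- Product of the operators `1 - T ^ N j`, `j < n`. -/
noncomputable def prodOp (T : H →L[ℝ] H) : ℕ → (ℕ → ℕ) → (H →L[ℝ] H)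
  | 0, _ => 1
  | n + 1, N => (1 - T ^ N 0) * prodOp T n (fun j => N (j + 1))

lemma prodOp_add (T : H →L[ℝ] H) (m n : ℕ) : ∀ N : ℕ → ℕ,
    prodOp T (m + n) N = prodOp T m N * prodOp T n (fun j => N (m + j)) := by
  induction m with
  | zero => intro N; simp [prodOp]
  | succ m ih =>
    intro N
    rw [show m + 1 + n = (m + n) + 1 by ring, prodOp, prodOp, ih, mul_assoc]
    congr 4
    funext j
    congr 1
    ring

lemma prodOp_factor (T : H →L[ℝ] H) (m : ℕ) : ∀ N : ℕ → ℕ,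
    ∃ Q : H →L[ℝ] H, prodOp T m N = (1 - T) ^ m * Q := by
  induction m with
  | zero => intro N; exact ⟨1, by simp [prodOp]⟩
  | succ m ih =>
    intro N
    obtain ⟨Q, hQ⟩ := ih (fun j => N (j + 1))
    refine ⟨(∑ i ∈ Finset.range (N 0), T ^ i) * Q, ?_⟩
    have hc : Commute (∑ i ∈ Finset.range (N 0), T ^ i) ((1 - T) ^ m) := by
      refine Commute.pow_right ?_ m
      refine Commute.sum_left _ _ _ fun i _ => ?_
      exact ((Commute.one_right T).sub_right (Commute.refl T)).pow_left i
    rw [prodOp, hQ, ← mul_neg_geom_sum, pow_succ', mul_assoc, mul_assoc, ← mul_assoc _ _ Q,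
      hc.eq, mul_assoc]

lemma prodOp_norm_le {T : H →L[ℝ] H} (h : Firm T) (m : ℕ) : ∀ (N : ℕ → ℕ) (x : H),
    ‖prodOp T m N x‖ ≤ ‖x‖ := by
  induction m with
  | zero => intro N x; simp [prodOp]
  | succ m ih =>
    intro N x
    rw [prodOp, mul_apply_eq_comp]
    exact (h.norm_compl_pow_le _ _).trans (ih _ _)

lemma approx [CompleteSpace H] {T : H →L[ℝ] H} (h : Firm T) (x : H)
    (hx : Filter.Tendsto (fun k : ℕ => (T ^ k) x) Filter.atTop (nhds 0)) (ε : ℝ) (hε : 0 < ε) :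
    ∃ y, dist x y ≤ ε ∧ ∀ m : ℕ, ∃ z, y = ((1 - T) ^ m) z := by
  have : ∀ j : ℕ, ∃ N : ℕ, ‖(T ^ N) x‖ ≤ ε / 2 / 2 ^ j := by
    intro j
    have h1 : (0 : ℝ) < ε / 2 / 2 ^ j := by positivity
    have h2 := hx.norm
    rw [norm_zero] at h2
    exact (h2.eventually_le_const h1).exists
  choose N hN using this
  have hstep : ∀ (N : ℕ → ℕ) n, dist (prodOp T n N x) (prodOp T (n + 1) N x) ≤ ‖(T ^ N n) x‖ := by
    intro N n
    rw [prodOp_add, dist_eq_norm, mul_apply_eq_comp, ← map_sub]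
    refine (prodOp_norm_le h _ _ _).trans ?_
    simp [prodOp]
  have hlim : ∀ m, ∃ z, Filter.Tendsto (fun n => prodOp T n (fun j => N (m + j)) x)
      Filter.atTop (nhds z) := by
    intro m
    refine cauchySeq_tendsto_of_complete (cauchySeq_of_le_geometric_two (C := ε) fun n => ?_)
    refine (hstep _ _).trans ((hN _).trans ?_)
    gcongr
    · norm_num
    · omega
  obtain ⟨y, hy⟩ := hlim 0
  simp only [zero_add] at hy
  refine ⟨y, ?_, fun m => ?_⟩
  · have := dist_le_of_le_geometric_two_of_tendsto₀ (C := ε) 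
      (fun n => (hstep N n).trans (hN n)) hy
    simpa [prodOp] using this
  · obtain ⟨z, hz⟩ := hlim m
    obtain ⟨Q, hQ⟩ := prodOp_factor T m N
    refine ⟨Q z, ?_⟩
    rw [← mul_apply_eq_comp, ← hQ]
    have h1 := ((prodOp T m N).continuous.tendsto z).comp hz
    have h2 := (Filter.tendsto_add_atTop_iff_nat m).2 hy
    refine tendsto_nhds_unique h2 (h1.congr fun n => ?_)
    rw [add_comm n m, prodOp_add]
    rfl

lemma abstract_main [CompleteSpace H] {T : H →L[ℝ] H} (h : Firm T) (K : Submodule ℝ H)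
    [K.HasOrthogonalProjection] (hK : ∀ x, x ∈ K ↔ T x = x) :
    ∃ Y : Submodule ℝ H, Dense (Y : Set H) ∧ ∀ y ∈ Y, ∀ n : ℕ,
      Filter.Tendsto (fun k : ℕ => (k : ℝ) ^ n * ‖(T ^ k) y - K.starProjection y‖)
        Filter.atTop (nhds 0) := by
  let Z : Submodule ℝ H :=
    { carrier := {y | ∀ m : ℕ, ∃ z, y = ((1 - T) ^ m) z}
      zero_mem' := fun m => ⟨0, (map_zero _).symm⟩
      add_mem' := by
        intro a b ha hb m
        obtain ⟨u, hu⟩ := ha m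
        obtain ⟨v, hv⟩ := hb m
        exact ⟨u + v, by rw [map_add, ← hu, ← hv]⟩
      smul_mem' := by
        intro c a ha m
        obtain ⟨u, hu⟩ := ha m
        exact ⟨c • u, by rw [map_smul, ← hu]⟩ }
  have hpowK : ∀ x ∈ K, ∀ k : ℕ, (T ^ k) x = x := by
    intro x hx k
    induction k with
    | zero => simp
    | succ k ih => rw [pow_succ, mul_apply_eq_comp, (hK x).1 hx, ih]
  refine ⟨K ⊔ Z, ?_, ?_⟩
  · rw [Submodule.dense_iff_topologicalClosure_eq_top, Submodule.topologicalClosure_eq_top_iff,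
      Submodule.eq_bot_iff]
    intro v hv
    have hvK : ∀ u ∈ K, ⟪u, v⟫ = 0 := fun u hu =>
      (Submodule.mem_orthogonal _ _).1 hv u (Submodule.mem_sup_left hu)
    have hvZ : v ∈ Zᗮ := (Submodule.mem_orthogonal _ _).2 fun u hu =>
      (Submodule.mem_orthogonal _ _).1 hv u (Submodule.mem_sup_right hu)
    have hcl : (1 - T) ((1 - T) v) ∈ Z.topologicalClosure := by
      have hx : Filter.Tendsto (fun k : ℕ => (T ^ k) ((1 - T) ((1 - T) v)))
          Filter.atTop (nhds 0) := by
        rw [tendsto_zero_iff_norm_tendsto_zero]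
        have h1 : Filter.Tendsto (fun k : ℕ => ‖(1 - T) v‖ ^ 2 / ((k : ℝ) + 1))
            Filter.atTop (nhds 0) := by
          have := (tendsto_one_div_add_atTop_nhds_zero_nat (𝕜 := ℝ)).const_mul (‖(1 - T) v‖ ^ 2)
          simpa [div_eq_mul_inv] using this
        have h2 : Filter.Tendsto (fun k : ℕ => ‖(T ^ k) ((1 - T) ((1 - T) v))‖ ^ 2)
            Filter.atTop (nhds 0) := by
          refine squeeze_zero (fun k => by positivity) (fun k => ?_) h1
          rw [le_div_iff₀ (by positivity), mul_comm]
          exact h.decay k _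
        simpa using h2.sqrt
      rw [← SetLike.mem_coe, Submodule.topologicalClosure_coe, Metric.mem_closure_iff]
      intro ε hε
      obtain ⟨y, hy1, hy2⟩ := approx h _ hx (ε / 2) (by positivity)
      exact ⟨y, hy2, by linarith⟩
    rw [← Submodule.orthogonal_closure] at hvZ
    have h0 := (Submodule.mem_orthogonal _ _).1 hvZ _ hcl
    rw [h.compl.symm, real_inner_self_eq_norm_sq] at h0
    have h3 : (1 - T) v = 0 := by simpa using h0
    have h4 : v ∈ K := by
      rw [hK]
      simp only [sub_apply, one_apply_eq_self, sub_eq_zero] at h3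
      exact h3.symm
    simpa using hvK v h4
  · intro y hy n
    obtain ⟨a, ha, b, hb, rfl⟩ := Submodule.mem_sup.1 hy
    have hbK : b ∈ Kᗮ := by
      obtain ⟨z, hz⟩ := hb 1
      rw [Submodule.mem_orthogonal]
      intro u hu
      rw [hz, pow_one, ← h.compl.symm]
      simp [(hK u).1 hu]
    refine (h.superpoly b hb n).congr fun k => ?_
    rw [map_add, map_add, hpowK a ha, Submodule.starProjection_eq_self_iff.2 ha,
      (Submodule.starProjection_apply_eq_zero_iff K).2 hbK]
    simp
end aux

/-- If `A_ω` is not closed in `H`, then there is a dense linear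
subspace `Y ⊆ H` on which the simultaneous projection method converges
super-polynomially fast: `k^n ‖T_ω^k y − P_M y‖ → 0` for every `y ∈ Y` and `n ≥ 1`. -/
theorem stmt_18 {H : Type*} [NormedAddCommGroup H] [InnerProductSpace ℝ H] [CompleteSpace H]
    {ι : Type*} [Countable ι] [Nonempty ι]
    (ω : ι → ℝ) (hω : ∀ i, 0 < ω i) (hωsum : HasSum ω 1)
    (M : ι → Submodule ℝ H) [∀ i, CompleteSpace (M i)]
    [CompleteSpace ↥(⨅ i, M i : Submodule ℝ H)]
    (hMnt : ∀ i, M i ≠ ⊥)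
    (hnc : ¬ IsClosed { y : H | ∃ x : ι → H, (∀ i, x i ∈ (M i)ᗮ) ∧
      (Summable fun i => ω i * ‖x i‖ ^ 2) ∧ y = ∑' i, ω i • x i }) :
    ∃ Y : Submodule ℝ H, Dense (Y : Set H) ∧
      ∀ y ∈ Y, ∀ n : ℕ, 1 ≤ n →
        Filter.Tendsto
          (fun k : ℕ => (k : ℝ) ^ n *
            ‖(fun z : H => ∑' i, ω i • ((Submodule.orthogonalProjectionOnto (M i) z : H)))^[k] y -
              (Submodule.orthogonalProjectionOnto (⨅ i, M i : Submodule ℝ H) y : H)‖)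
          Filter.atTop (nhds 0) := by
  have hP : ∀ i, ‖ω i • (M i).starProjection‖ ≤ ω i := fun i => by
    rw [norm_smul, Real.norm_of_nonneg (hω i).le]
    exact mul_le_of_le_one_right (hω i).le (M i).starProjection_norm_le
  have hS : Summable fun i => ω i • (M i).starProjection :=
    Summable.of_norm_bounded hωsum.summable hP
  let T : H →L[ℝ] H := ∑' i, ω i • (M i).starProjection
  have hT : ∀ z, HasSum (fun i => ω i • (M i).starProjection z) (T z) := fun z => by
    have := (ContinuousLinearMap.apply ℝ H z).hasSum hS.hasSum
    simpa using this
  have hin : ∀ x y, HasSum (fun i => ω i * ⟪(M i).starProjection x, y⟫) ⟪T x, y⟫ := fun x y => by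
    have := (innerSL ℝ y).hasSum (hT x)
    simpa [real_inner_comm, inner_smul_right, inner_smul_left] using this
  have hself : ∀ i x, ⟪(M i).starProjection x, x⟫ = ‖(M i).starProjection x‖ ^ 2 := fun i x => by
    rw [← real_inner_self_eq_norm_sq, Submodule.inner_starProjection_left_eq_right,
      Submodule.inner_starProjection_left_eq_right,
      Submodule.starProjection_eq_self_iff.2 ((M i).starProjection_apply_mem x)]
  have hfirm : Firm T :=
    { symm := fun x y => by
        refine (hin x y).unique ?_
        have := hin y x
        rw [real_inner_comm] at this
        have e : (fun i => ω i * ⟪(M i).starProjection x, y⟫) =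
            fun i => ω i * ⟪(M i).starProjection y, x⟫ := by
          funext i
          rw [Submodule.inner_starProjection_left_eq_right, real_inner_comm]
        rw [e]
        exact this
      firm := fun x => by
        have h1 := hin x x
        have h2 := hin x (T x)
        have h3 := hωsum.mul_right (‖T x‖ ^ 2)
        have h4 := (h1.sub (h2.mul_left 2)).add h3
        have h5 := h4.nonneg (fun i => by
          have e : ω i * ⟪(M i).starProjection x, x⟫ - 2 * (ω i * ⟪(M i).starProjection x, T x⟫) +
              ω i * ‖T x‖ ^ 2 = ω i * ‖(M i).starProjection x - T x‖ ^ 2 := by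
            rw [norm_sub_sq_real, hself]
            ring
          rw [e]
          have := hω i
          positivity)
        rw [real_inner_self_eq_norm_sq] at h5
        linarith }
  have hK : ∀ x, x ∈ (⨅ i, M i : Submodule ℝ H) ↔ T x = x := by
    intro x
    rw [Submodule.mem_iInf]
    constructor
    · intro hx
      have h1 := hT x
      simp only [Submodule.starProjection_eq_self_iff.2 (hx _)] at h1
      have h2 := hωsum.smul_const x
      rw [one_smul] at h2
      exact h1.unique h2
    · intro hx i
      have h1 := (hωsum.mul_right (‖x‖ ^ 2)).sub (hin x x)
      rw [hx, real_inner_self_eq_norm_sq, one_mul, sub_self] at h1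
      have hnn : ∀ j, 0 ≤ ω j * ‖x‖ ^ 2 - ω j * ⟪(M j).starProjection x, x⟫ := fun j => by
        rw [hself, ← mul_sub]
        refine mul_nonneg (hω j).le (sub_nonneg.2 ?_)
        gcongr
        exact (M j).norm_starProjection_apply_le x
      have h2 := congrFun ((hasSum_zero_iff_of_nonneg hnn).1 h1) i
      simp only [Pi.zero_apply, hself, ← mul_sub] at h2
      have h3 := (mul_eq_zero.1 h2).resolve_left (hω i).ne'
      rw [(M i).mem_iff_norm_starProjection]
      rw [sub_eq_zero] at h3
      exact ((sq_eq_sq₀ (norm_nonneg _) (norm_nonneg _)).1 h3).symm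
  obtain ⟨Y, hY, hconv⟩ := abstract_main hfirm (⨅ i, M i) hK
  refine ⟨Y, hY, fun y hy n _ => ?_⟩
  have hfun : (fun z : H => ∑' i, ω i • ((Submodule.orthogonalProjectionOnto (M i) z : H))) = T := by
    funext z
    exact (hT z).tsum_eq
  rw [hfun]
  refine (hconv y hy n).congr fun k => ?_
  rw [FunLike.coe_pow_eq_iterate]
  rfl
end

section
/- Let y ∈ A_ω, i.e. y = ∑ᵢ ω i • xᵢ for some family x : ι → H with xᵢ ∈ Mᵢ^⊥ for all i and ∑ᵢ ω i ‖xᵢ‖² < ∞. Then there exists a constant C > 0 (depending on y and ω) such that for every integer k ≥ 1, ‖T_ω^k y − P_M y‖ ≤ C / √k. -/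
open RealInnerProductSpace

namespace Stmt19

variable {H : Type*} [NormedAddCommGroup H] [InnerProductSpace ℝ H] [CompleteSpace H]
    {ι : Type*}

theorem summ (ω : ι → ℝ) (hω : ∀ i, 0 < ω i) (hωsum : HasSum ω 1)
    (M : ι → Submodule ℝ H) [∀ i, CompleteSpace (M i)] (z : H) :
    Summable fun i => ω i • (((M i).orthogonalProjectionOnto z : H)) := by
  refine Summable.of_norm_bounded (g := fun i => ω i * ‖z‖) (hωsum.summable.mul_right _) ?_
  intro i
  rw [norm_smul, Real.norm_of_nonneg (hω i).le]
  exact mul_le_mul_of_nonneg_left ((M i).norm_starProjection_apply_le z) (hω i).le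

/-- The simultaneous projection operator as a linear map. -/
noncomputable def T (ω : ι → ℝ) (hω : ∀ i, 0 < ω i) (hωsum : HasSum ω 1)
    (M : ι → Submodule ℝ H) [∀ i, CompleteSpace (M i)] : H →ₗ[ℝ] H where
  toFun z := ∑' i, ω i • (((M i).orthogonalProjectionOnto z : H))
  map_add' a b := by
    rw [← (summ ω hω hωsum M a).tsum_add (summ ω hω hωsum M b)]
    simp [smul_add]
  map_smul' c a := by
    simp only [RingHom.id_apply]
    rw [← tsum_const_smul'']
    congr 1; ext i
    simp [smul_comm c]

section
variable (ω : ι → ℝ) (hω : ∀ i, 0 < ω i) (hωsum : HasSum ω 1)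
    (M : ι → Submodule ℝ H) [∀ i, CompleteSpace (M i)]

theorem inner_T (w z : H) :
    HasSum (fun i => ω i * ⟪w, (M i).starProjection z⟫) ⟪w, T ω hω hωsum M z⟫ := by
  have h := (summ ω hω hωsum M z).hasSum.mapL (innerSL ℝ w)
  convert h using 1
  · rfl
  · funext i
    simp
  · rfl

theorem T_symm : (T ω hω hωsum M).IsSymmetric := by
  intro a b
  rw [real_inner_comm]
  refine (inner_T ω hω hωsum M b a).unique ?_
  convert inner_T ω hω hωsum M a b using 3 with i
  rw [← Submodule.inner_starProjection_left_eq_right, real_inner_comm]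

theorem proj_self (K : Submodule ℝ H) [CompleteSpace K] (z : H) :
    ⟪K.starProjection z, K.starProjection z⟫ = ⟪z, K.starProjection z⟫ := by
  rw [Submodule.inner_starProjection_left_eq_right,
    Submodule.starProjection_eq_self_iff.2 (Submodule.starProjection_apply_mem _ _)]

theorem T_nonneg (a : H) : 0 ≤ ⟪a, T ω hω hωsum M a⟫ := by
  refine (inner_T ω hω hωsum M a a).nonneg fun i => mul_nonneg (hω i).le ?_
  rw [← proj_self]
  exact real_inner_self_nonneg

theorem T_norm (a : H) : ‖T ω hω hωsum M a‖ ≤ ‖a‖ := by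
  have : HasSum (fun i => ω i * ‖a‖) ‖a‖ := by simpa using hωsum.mul_right ‖a‖
  refine tsum_of_norm_bounded this fun i => ?_
  rw [norm_smul, Real.norm_of_nonneg (hω i).le]
  exact mul_le_mul_of_nonneg_left ((M i).norm_starProjection_apply_le a) (hω i).le

theorem x_summ {H : Type*} [NormedAddCommGroup H] [InnerProductSpace ℝ H] [CompleteSpace H]
    {ι : Type*} (ω : ι → ℝ) (hω : ∀ i, 0 < ω i) (hωsum : HasSum ω 1) (x : ι → H) (hs : Summable fun i => ω i * ‖x i‖ ^ 2) :
    Summable fun i => ω i • x i := by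
  refine Summable.of_norm_bounded (hωsum.summable.add hs) fun i => ?_
  rw [norm_smul, Real.norm_of_nonneg (hω i).le]
  nlinarith [mul_nonneg (hω i).le (sq_nonneg (‖x i‖ - 1)), mul_nonneg (hω i).le (norm_nonneg (x i)),
    hω i]

theorem key (x : ι → H) (hx : ∀ i, x i ∈ (M i)ᗮ) (hs : Summable fun i => ω i * ‖x i‖ ^ 2) (z : H) :
    2 * ⟪z, ∑' i, ω i • x i⟫ ≤ (∑' i, ω i * ‖x i‖ ^ 2) + ⟪z, z - T ω hω hωsum M z⟫ := by
  have h1 : HasSum (fun i => ω i * ⟪z, x i⟫) ⟪z, ∑' i, ω i • x i⟫ := by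
    have h := (x_summ ω hω hωsum x hs).hasSum.mapL (innerSL ℝ z)
    simpa [inner_smul_right] using h
  have h2 : HasSum (fun i => ω i * ⟪z, z⟫) ⟪z, z⟫ := by simpa using hωsum.mul_right ⟪z, z⟫
  rw [inner_sub_right]
  refine hasSum_le (fun i => ?_) (h1.mul_left 2) (hs.hasSum.add (h2.sub (inner_T ω hω hωsum M z z)))
  have h3 : ⟪(M i).starProjection z, x i⟫ = 0 := hx i _ (Submodule.starProjection_apply_mem _ _)
  have h4 : ⟪(M i).starProjection z, (M i).starProjection z⟫ = ⟪z, (M i).starProjection z⟫ :=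
    proj_self _ _
  have h5 : 0 ≤ ⟪x i - (z - (M i).starProjection z), x i - (z - (M i).starProjection z)⟫ :=
    real_inner_self_nonneg
  simp only [inner_sub_left, inner_sub_right] at h5
  have h6 := real_inner_comm z (x i)
  have h7 := real_inner_comm ((M i).starProjection z) (x i)
  have h8 := real_inner_comm z ((M i).starProjection z)
  have h5 : 0 ≤ ⟪x i, x i⟫ - 2 * ⟪z, x i⟫ + (⟪z, z⟫ - ⟪z, (M i).starProjection z⟫) := by linarith
  rw [← real_inner_self_eq_norm_sq]
  have := mul_nonneg (hω i).le h5
  nlinarith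

theorem telescope (L : H →ₗ[ℝ] H) (y : H) (n : ℕ) :
    (∑ j ∈ Finset.range n, (L ^ j) y) - L (∑ j ∈ Finset.range n, (L ^ j) y) = y - (L ^ n) y := by
  induction n with
  | zero => simp
  | succ n ih =>
    rw [Finset.sum_range_succ, map_add, add_sub_add_comm, ih, pow_succ' L n]
    simp

theorem a_even (k : ℕ) (y : H) :
    ⟪y, (T ω hω hωsum M ^ (2 * k)) y⟫ = ‖(T ω hω hωsum M ^ k) y‖ ^ 2 := by
  rw [two_mul, pow_add, Module.End.mul_apply, ← (T_symm ω hω hωsum M).pow k,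
    real_inner_self_eq_norm_sq]

theorem a_odd (k : ℕ) (y : H) : 0 ≤ ⟪y, (T ω hω hωsum M ^ (2 * k + 1)) y⟫ := by
  have : 2 * k + 1 = k + (1 + k) := by ring
  rw [this, pow_add, pow_add, Module.End.mul_apply, Module.End.mul_apply,
    ← (T_symm ω hω hωsum M).pow k, pow_one]
  exact T_nonneg ω hω hωsum M _

theorem norm_anti (y : H) : Antitone fun k : ℕ => ‖(T ω hω hωsum M ^ k) y‖ := by
  refine antitone_nat_of_succ_le fun k => ?_
  rw [pow_succ', Module.End.mul_apply]
  exact T_norm ω hω hωsum M _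

theorem sum_lower (n : ℕ) (y : H) :
    ∑ k ∈ Finset.range n, ‖(T ω hω hωsum M ^ k) y‖ ^ 2 ≤
      ∑ j ∈ Finset.range (2 * n), ⟪y, (T ω hω hωsum M ^ j) y⟫ := by
  induction n with
  | zero => simp
  | succ n ih =>
    rw [mul_add, mul_one, Finset.sum_range_succ, Finset.sum_range_succ, Finset.sum_range_succ,
      a_even]
    linarith [a_odd ω hω hωsum M n y]

theorem bound (x : ι → H) (hx : ∀ i, x i ∈ (M i)ᗮ) (hs : Summable fun i => ω i * ‖x i‖ ^ 2)
    (n : ℕ) :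
    n * ‖(T ω hω hωsum M ^ n) (∑' i, ω i • x i)‖ ^ 2 ≤ ∑' i, ω i * ‖x i‖ ^ 2 := by
  set y := ∑' i, ω i • x i with hy
  have hk := key ω hω hωsum M x hx hs
    (∑ j ∈ Finset.range (2 * n), (T ω hω hωsum M ^ j) y)
  have hl := sum_lower ω hω hωsum M n y
  rw [telescope, ← hy, inner_sub_right] at hk
  have hnn : 0 ≤ ⟪∑ j ∈ Finset.range (2 * n), (T ω hω hωsum M ^ j) y,
      (T ω hω hωsum M ^ (2 * n)) y⟫ := by
    rw [sum_inner]
    refine Finset.sum_nonneg fun j _ => ?_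
    rw [(T_symm ω hω hωsum M).pow j, ← Module.End.mul_apply, ← pow_add]
    rcases Nat.even_or_odd' (j + 2 * n) with ⟨m, h | h⟩
    · rw [h, a_even]; positivity
    · rw [h]; exact a_odd ω hω hωsum M m y
  rw [← inner_sum, real_inner_comm] at hl
  have hc : n * ‖(T ω hω hωsum M ^ n) y‖ ^ 2 ≤
      ∑ k ∈ Finset.range n, ‖(T ω hω hωsum M ^ k) y‖ ^ 2 := by
    rw [← nsmul_eq_mul]
    have := Finset.card_nsmul_le_sum (Finset.range n)
      (fun k => ‖(T ω hω hωsum M ^ k) y‖ ^ 2) (‖(T ω hω hωsum M ^ n) y‖ ^ 2) (fun k hk => ?_)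
    · simpa using this
    · exact pow_le_pow_left₀ (norm_nonneg _)
        (norm_anti ω hω hωsum M y (Finset.mem_range.1 hk).le) 2
  linarith

end

end Stmt19


/-- For every starting point `y ∈ A_ω` there is `C > 0` such that
`‖T_ω^k y − P_M y‖ ≤ C / √k` for all `k ≥ 1` (polynomial rate of convergence). -/
theorem stmt_19 {H : Type*} [NormedAddCommGroup H] [InnerProductSpace ℝ H] [CompleteSpace H]
    {ι : Type*} [Countable ι] [Nonempty ι]
    (ω : ι → ℝ) (hω : ∀ i, 0 < ω i) (hωsum : HasSum ω 1)
    (M : ι → Submodule ℝ H) [∀ i, CompleteSpace (M i)]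
    [CompleteSpace ↥(⨅ i, M i : Submodule ℝ H)]
    (hMnt : ∀ i, M i ≠ ⊥)
    (y : H)
    (hy : ∃ x : ι → H, (∀ i, x i ∈ (M i)ᗮ) ∧
      (Summable fun i => ω i * ‖x i‖ ^ 2) ∧ y = ∑' i, ω i • x i) :
    ∃ C : ℝ, 0 < C ∧ ∀ k : ℕ, 1 ≤ k →
      ‖(fun z : H => ∑' i, ω i • ((Submodule.orthogonalProjectionOnto (M i) z : H)))^[k] y -
          (Submodule.orthogonalProjectionOnto (⨅ i, M i : Submodule ℝ H) y : H)‖ ≤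
        C / Real.sqrt k := by
  obtain ⟨x, hx, hs, rfl⟩ := hy
  have hS : 0 ≤ ∑' i, ω i * ‖x i‖ ^ 2 := tsum_nonneg fun i => mul_nonneg (hω i).le (by positivity)
  set S := ∑' i, ω i * ‖x i‖ ^ 2 with hSdef
  refine ⟨Real.sqrt S + 1, by positivity, fun k hk => ?_⟩
  have hmem : (∑' i, ω i • x i) ∈ (⨅ i, M i : Submodule ℝ H)ᗮ := by
    intro u hu
    have h := (Stmt19.x_summ ω hω hωsum x hs).hasSum.mapL (innerSL ℝ u)
    refine h.unique ?_
    convert hasSum_zero with i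
    have : ⟪u, x i⟫ = 0 := hx i u ((Submodule.mem_iInf _).1 hu i)
    simp [inner_smul_right, this]
  rw [Submodule.orthogonalProjectionOnto_apply_of_mem_orthogonal hmem]
  have hb := Stmt19.bound ω hω hωsum M x hx hs k
  rw [Module.End.pow_apply] at hb
  change k * ‖(fun z : H => ∑' i, ω i • ((Submodule.orthogonalProjectionOnto (M i) z : H)))^[k] _‖ ^ 2 ≤ S at hb
  have hk0 : (0 : ℝ) < k := by exact_mod_cast hk
  rw [Submodule.coe_zero, sub_zero, le_div_iff₀ (Real.sqrt_pos.2 hk0)]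
  refine le_trans (Real.le_sqrt_of_sq_le ?_) (le_add_of_nonneg_right zero_le_one)
  rw [mul_pow, Real.sq_sqrt hk0.le, mul_comm]
  exact hb
end
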